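/- Let 0 < a < b with a < |q|·b and let m ≥ 3 be an integer. For δ > 0 set 𝒮_δ := {(c,ζ) ∈ ℂ × ℂ : 0 < |c| ≤ δ, log|c| − log b ≤ Re ζ ≤ log|c| − log a} and 𝒮'_δ := {(c,ζ) ∈ ℂ × ℂ : 0 < |c| ≤ δ, log|c| − log b ≤ Re ζ ≤ log|c| − log a + λ₁}. Then there exist δ₀ > 0 and C > 0, depending only on τ, m, a, b, such that for every 0 < δ ≤ δ₀ and every Δ holomorphic on 𝒮_δ with ‖Δ‖_m := sup_{(c,ζ)∈𝒮_δ} |Δ(c,ζ)|·|ζ|^m < ∞, there is a unique holomorphic function φ on 𝒮'_δ satisfying: (1) φ(c, ζ+λ) − φ(c,ζ) = Δ(c,ζ) for all (c,ζ) ∈ 𝒮_δ; (2) φ is bounded on 𝒮'_δ and sup of |φ(c,ζ)|·√|Im(ζ/λ)| over {(c,ζ) ∈ 𝒮'_δ : Im(ζ/λ) ≤ −1} is finite; moreover this φ satisfies sup_{𝒮'_δ} |φ| ≤ C·‖Δ‖_m and |φ(c,ζ)| ≤ C·‖Δ‖_m/√|Im(ζ/λ)| whenever Im(ζ/λ) ≤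 −1. -/

import Mathlib

open Complex

/-- The parameter domain `𝒮_δ = {(c,ζ) : 0 < |c| ≤ δ, log|c| − log b ≤ Re ζ ≤ log|c| − log a}`. -/
noncomputable def paramStrip (a b δ : ℝ) : Set (ℂ × ℂ) :=
  {p : ℂ × ℂ | 0 < ‖p.1‖ ∧ ‖p.1‖ ≤ δ ∧
    Real.log ‖p.1‖ - Real.log b ≤ p.2.re ∧
    p.2.re ≤ Real.log ‖p.1‖ - Real.log a}

/-- The enlarged parameter domain `𝒮'_δ`, with `Re ζ ≤ log|c| − log a + λ₁`, `λ₁ = 2π·Im τ`. -/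
noncomputable def paramStrip' (τ : ℂ) (a b δ : ℝ) : Set (ℂ × ℂ) :=
  {p : ℂ × ℂ | 0 < ‖p.1‖ ∧ ‖p.1‖ ≤ δ ∧
    Real.log ‖p.1‖ - Real.log b ≤ p.2.re ∧
    p.2.re ≤ Real.log ‖p.1‖ - Real.log a + 2 * Real.pi * τ.im}

/-- The defining properties of the solution `φ` of statement 13: holomorphic on `𝒮'_δ`,
solving the difference equation (1) on `𝒮_δ`, bounded, and with bounded
`|φ|·√|Im(ζ/λ)|` on `{Im(ζ/λ) ≤ −1}` (condition (2)); here `λ = −2πiτ`. -/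
noncomputable def diffSolProp (τ : ℂ) (a b δ : ℝ) (Δ φ : ℂ × ℂ → ℂ) : Prop :=
  ContinuousOn φ (paramStrip' τ a b δ) ∧
  DifferentiableOn ℂ φ (interior (paramStrip' τ a b δ)) ∧
  (∀ p ∈ paramStrip a b δ,
    φ (p.1, p.2 + (-(2 * (Real.pi : ℂ) * Complex.I * τ))) - φ p = Δ p) ∧
  (∃ M : ℝ, ∀ p ∈ paramStrip' τ a b δ, ‖φ p‖ ≤ M) ∧
  (∃ M : ℝ, ∀ p ∈ paramStrip' τ a b δ,
    (p.2 / (-(2 * (Real.pi : ℂ) * Complex.I * τ))).im ≤ -1 →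
    ‖φ p‖ *
      Real.sqrt |(p.2 / (-(2 * (Real.pi : ℂ) * Complex.I * τ))).im| ≤ M)

namespace S13

/-- The periodic Cauchy kernel. -/
noncomputable def kern (lam z : ℂ) : ℂ := (1 - cexp (2 * (Real.pi : ℂ) * I * (z / lam)))⁻¹

lemma norm_expo (lam z : ℂ) :
    ‖cexp (2 * (Real.pi : ℂ) * I * (z / lam))‖ = Real.exp (-(2 * Real.pi * (z / lam).im)) := by
  rw [Complex.norm_exp]
  congr 1
  simp [Complex.mul_re, Complex.mul_im]

lemma kern_low (lam z : ℂ) (hv : (z / lam).im ≤ -1) :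
    ‖kern lam z‖ ≤ 1 ∧ -(z / lam).im * ‖kern lam z‖ ≤ 1 := by
  set v := (z / lam).im with hvdef
  have h1 : -v ≤ ‖1 - cexp (2 * (Real.pi : ℂ) * I * (z / lam))‖ := by
    have h2 := norm_sub_norm_le (cexp (2 * (Real.pi : ℂ) * I * (z / lam))) 1
    rw [norm_sub_rev, norm_expo, ← hvdef] at h2
    have h3 := Real.add_one_le_exp (-(2 * Real.pi * v))
    have h4 := Real.pi_gt_three
    simp only [norm_one] at h2
    nlinarith
  have h5 : 0 < ‖1 - cexp (2 * (Real.pi : ℂ) * I * (z / lam))‖ := by linarith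
  have h6 : -v * ‖kern lam z‖ ≤ 1 := by
    unfold kern
    rw [norm_inv, mul_inv_le_iff₀ h5]
    linarith
  refine ⟨?_, h6⟩
  have := norm_nonneg (kern lam z)
  nlinarith

lemma kern_high (lam z : ℂ) (hv : 1 ≤ (z / lam).im) : ‖kern lam z‖ ≤ 2 := by
  set v := (z / lam).im with hvdef
  have h1 : 1/2 ≤ ‖1 - cexp (2 * (Real.pi : ℂ) * I * (z / lam))‖ := by
    have h2 := norm_sub_norm_le 1 (cexp (2 * (Real.pi : ℂ) * I * (z / lam)))
    rw [norm_expo, ← hvdef] at h2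
    have h3 := Real.add_one_le_exp ((2 * Real.pi * v))
    have h4 := Real.pi_gt_three
    have h5 : Real.exp (-(2 * Real.pi * v)) ≤ 1/2 := by
      rw [Real.exp_neg, inv_le_comm₀ (Real.exp_pos _) (by norm_num)]
      nlinarith
    simp only [norm_one] at h2
    linarith
  unfold kern
  rw [norm_inv, inv_le_comm₀ (by linarith) (by norm_num)]
  linarith

lemma kern_far (lam z : ℂ) (hv : 1 ≤ |(z / lam).im|) : ‖kern lam z‖ ≤ 2 := by
  rcases le_abs.1 hv with h | h
  · exact kern_high lam z h
  · linarith [(kern_low lam z (by linarith)).1]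

lemma kern_periodic (lam z : ℂ) (hl : lam ≠ 0) : kern lam (z + lam) = kern lam z := by
  unfold kern
  have : 2 * (Real.pi : ℂ) * I * ((z + lam) / lam) =
    2 * (Real.pi : ℂ) * I * (z / lam) + 2 * (Real.pi : ℂ) * I := by
    field_simp
  rw [this, Complex.exp_periodic]

lemma kern_den_ne (lam z : ℂ) (hl : 0 < lam.re) (hz : z ≠ 0) (h1 : |z.re| < lam.re) :
    1 - cexp (2 * (Real.pi : ℂ) * I * (z / lam)) ≠ 0 := by
  intro h
  have h2 : cexp (2 * (Real.pi : ℂ) * I * (z / lam)) = 1 := (sub_eq_zero.1 h).symm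
  rw [Complex.exp_eq_one_iff] at h2
  obtain ⟨n, hn⟩ := h2
  have hl0 : lam ≠ 0 := by rintro rfl; simp at hl
  have h3 : z = n * lam := by
    have := Complex.two_pi_I_ne_zero
    rw [mul_comm] at hn
    have h4 := mul_right_cancel₀ this hn
    rw [div_eq_iff hl0] at h4
    exact h4
  have h4 : z.re = n * lam.re := by rw [h3]; simp
  have hn0 : n ≠ 0 := by
    rintro rfl
    exact hz (by simpa using h3)
  have h5 : (1 : ℝ) ≤ |(n : ℝ)| := by
    have := Int.one_le_abs hn0
    exact_mod_cast this
  rw [h4, abs_mul, abs_of_pos hl] at h1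
  nlinarith

lemma kern_diff (lam z : ℂ) (hl : 0 < lam.re) (hz : z ≠ 0) (h1 : |z.re| < lam.re) :
    DifferentiableAt ℂ (kern lam) z := by
  unfold kern
  refine DifferentiableAt.inv ?_ (kern_den_ne lam z hl hz h1)
  fun_prop

lemma kern_diff' (lam z : ℂ) (h0 : 0 < z.re) (h1 : z.re < lam.re) :
    DifferentiableAt ℂ (kern lam) z := by
  refine kern_diff lam z (by linarith) ?_ (by rw [abs_of_pos h0]; exact h1)
  rintro rfl; simp at h0

lemma kern_bound (lam : ℂ) (ε : ℝ) (hε : 0 < ε) (hl : 0 < lam.re) :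
    ∃ C : ℝ, 0 < C ∧ ∀ z : ℂ, ε ≤ z.re → z.re ≤ lam.re - ε →
      ‖kern lam z‖ ≤ C ∧ -(z / lam).im * ‖kern lam z‖ ≤ C := by
  have hl0 : lam ≠ 0 := by rintro rfl; simp at hl
  let f : ℝ × ℝ → ℂ := fun p => lam * (((p.1 + p.2 * lam.im) / lam.re : ℝ) + p.2 * I)
  have hfre : ∀ p, (f p).re = p.1 := by
    intro p
    simp [f, Complex.mul_re]
    field_simp
    ring
  have hK : IsCompact (Set.Icc ε (lam.re - ε) ×ˢ Set.Icc (-1 : ℝ) 1) :=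
    isCompact_Icc.prod isCompact_Icc
  have hf : Continuous f := by fun_prop
  have hc : ContinuousOn (fun p => kern lam (f p)) (Set.Icc ε (lam.re - ε) ×ˢ Set.Icc (-1 : ℝ) 1) := by
    intro p hp
    have h1 := hp.1
    refine ContinuousAt.continuousWithinAt ?_
    refine ContinuousAt.comp (g := kern lam) ?_ hf.continuousAt
    refine (kern_diff' lam _ ?_ ?_).continuousAt <;> rw [hfre] <;> linarith [h1.1, h1.2]
  obtain ⟨C, hC⟩ := hK.exists_bound_of_continuousOn hc
  refine ⟨max C 2, by positivity, fun z h1 h2 => ?_⟩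
  by_cases hv1 : (z / lam).im ≤ -1
  · have := kern_low lam z hv1
    have h2 := le_max_right C 2
    constructor <;> linarith
  by_cases hv2 : 1 ≤ (z / lam).im
  · have := kern_high lam z hv2
    have h2 := le_max_right C 2
    have := norm_nonneg (kern lam z)
    constructor
    · linarith
    · nlinarith
  push Not at hv1 hv2
  have hz : f (z.re, (z / lam).im) = z := by
    have : ((((z.re + (z / lam).im * lam.im) / lam.re : ℝ) : ℂ) + (z / lam).im * I) = z / lam := by
      apply Complex.ext
      · simp only [add_re, ofReal_re, mul_re, I_re, mul_zero, ofReal_im, I_im, mul_one, sub_self, add_zero]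
        rw [div_eq_iff hl.ne']
        have : z.re = (z / lam * lam).re := by rw [div_mul_cancel₀ _ hl0]
        conv_lhs => rw [this]
        rw [mul_re]; ring
      · simp
    simp only [f]
    rw [this]
    field_simp
  have := hC (z.re, (z / lam).im) ⟨⟨h1, h2⟩, ⟨hv1.le, hv2.le⟩⟩
  simp only [hz] at this
  have h3 := le_max_left C 2
  have := norm_nonneg (kern lam z)
  constructor
  · linarith
  · nlinarith

end S13


namespace S13

open MeasureTheory Filter Topology

lemma strip_eq (f : ℂ → ℂ) (α β u1 u2 : ℝ) (h1 : α < u1) (h12 : u1 ≤ u2) (h2 : u2 < β)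
    (hf : DifferentiableOn ℂ f {z | α < z.re ∧ z.re < β})
    (hi1 : Integrable (fun y : ℝ => f (u1 + y * I)))
    (hi2 : Integrable (fun y : ℝ => f (u2 + y * I)))
    (C T0 : ℝ) (hb : ∀ z : ℂ, u1 ≤ z.re → z.re ≤ u2 → T0 ≤ |z.im| → ‖f z‖ ≤ C / |z.im|) :
    ∫ y : ℝ, f (u1 + y * I) = ∫ y : ℝ, f (u2 + y * I) := by
  have key : ∀ T : ℝ, (∫ y : ℝ in (-T)..T, f (u2 + y * I)) - (∫ y : ℝ in (-T)..T, f (u1 + y * I))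
      = I * ((∫ x : ℝ in u1..u2, f (x + (-T : ℝ) * I)) - ∫ x : ℝ in u1..u2, f (x + T * I)) := by
    intro T
    have := integral_boundary_rect_eq_zero_of_differentiableOn f (u1 + (-T : ℝ) * I) (u2 + T * I)
      (hf.mono (by
        intro z hz
        simp [Complex.mem_reProdIm, Set.uIcc_of_le h12] at hz
        exact ⟨by linarith [hz.1.1], by linarith [hz.1.2]⟩))
    simp at this
    simp only [ofReal_neg]
    simp only [neg_mul]
    linear_combination (-I) * this + ((∫ y : ℝ in (-T)..T, f (u2 + y * I)) -
      (∫ y : ℝ in (-T)..T, f (u1 + y * I))) * Complex.I_mul_I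
  have t1 := intervalIntegral_tendsto_integral hi1 tendsto_neg_atTop_atBot tendsto_id
  have t2 := intervalIntegral_tendsto_integral hi2 tendsto_neg_atTop_atBot tendsto_id
  have t3 := t2.sub t1
  have t4 : Tendsto (fun T : ℝ => (∫ y : ℝ in (-T)..T, f (u2 + y * I)) -
      (∫ y : ℝ in (-T)..T, f (u1 + y * I))) atTop (𝓝 0) := by
    have t5 : Tendsto (fun T : ℝ => 2 * ((C * |u2 - u1|) / T)) atTop (𝓝 0) := by
      have := (tendsto_const_nhds (x := C * |u2 - u1|)).div_atTop (tendsto_id (α := ℝ) (x := atTop))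
      simpa using this.const_mul 2
    refine squeeze_zero_norm' ?_ t5
    filter_upwards [eventually_ge_atTop (max T0 1)] with T hT
    have hT0 : T0 ≤ T := le_trans (le_max_left _ _) hT
    have hT1 : 1 ≤ T := le_trans (le_max_right _ _) hT
    have hTa : |T| = T := abs_of_pos (by linarith)
    rw [key T, norm_mul, norm_I, one_mul]
    have aux : ∀ S : ℝ, |S| = T → ‖∫ x : ℝ in u1..u2, f (x + S * I)‖ ≤ C / T * |u2 - u1| := by
      intro S hS
      apply intervalIntegral.norm_integral_le_of_norm_le_const
      intro x hx
      rw [Set.uIoc_of_le h12] at hx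
      have := hb (x + S * I) (by simpa using hx.1.le) (by simpa using hx.2) (by simp [hS, hT0])
      simpa [hS] using this
    have e1 := aux (-T) (by rw [abs_neg, hTa])
    have e2 := aux T hTa
    have e3 := norm_sub_le (∫ x : ℝ in u1..u2, f (x + (-T : ℝ) * I)) (∫ x : ℝ in u1..u2, f (x + T * I))
    have e4 : C / T * |u2 - u1| = C * |u2 - u1| / T := by ring
    rw [e4] at e1 e2
    linarith
  have := tendsto_nhds_unique t3 t4
  exact (sub_eq_zero.1 this).symm

/-- Auxiliary function with one pole. -/
noncomputable def hh (R : ℝ) (w : ℂ) : ℂ := w⁻¹ - (w + R)⁻¹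

lemma integral_re_aux (u : ℝ) (hu : u ≠ 0) :
    Integrable (fun y : ℝ => u / (u ^ 2 + y ^ 2)) ∧
    ∫ y : ℝ, u / (u ^ 2 + y ^ 2) = u⁻¹ * |u| * Real.pi := by
  have e : (fun y : ℝ => u / (u ^ 2 + y ^ 2)) = fun y => u⁻¹ * (fun x : ℝ => (1 + x ^ 2)⁻¹) (y / u) := by
    funext y
    have : u ^ 2 + y ^ 2 ≠ 0 := by positivity
    have : 1 + (y / u) ^ 2 ≠ 0 := by positivity
    field_simp
  rw [e]
  constructor
  · exact (integrable_inv_one_add_sq.comp_div hu).const_mul _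
  · rw [integral_const_mul, Measure.integral_comp_div (fun x : ℝ => (1 + x ^ 2)⁻¹) u,
      integral_univ_inv_one_add_sq, smul_eq_mul]
    ring

lemma norm_line (u y : ℝ) :
    (min 1 (u ^ 2)) * (1 + y ^ 2) ≤ ‖(u + y * I : ℂ)‖ ^ 2 := by
  rw [← Complex.normSq_eq_norm_sq]
  simp [Complex.normSq_apply]
  have h1 := min_le_left 1 (u ^ 2)
  have h2 := min_le_right 1 (u ^ 2)
  nlinarith [sq_nonneg y]

lemma hh_int (R u : ℝ) (hR : 0 < R) (hu : u ≠ 0) (huR : -R < u) :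
    Integrable (fun y : ℝ => hh R (u + y * I)) := by
  have hne : ∀ (v y : ℝ), v ≠ 0 → (v + y * I : ℂ) ≠ 0 := by
    intro v y hv h
    apply hv
    simpa using congrArg Complex.re h
  have huR' : u + R ≠ 0 := by linarith
  have e : ∀ y : ℝ, (u + y * I + R : ℂ) = ((u + R : ℝ) + y * I : ℂ) := by
    intro y; push_cast; ring
  have hc : Continuous (fun y : ℝ => hh R (u + y * I)) := by
    unfold hh
    refine Continuous.sub ?_ ?_
    · exact Continuous.inv₀ (by fun_prop) (fun y => hne u y hu)
    · refine Continuous.inv₀ (by fun_prop) (fun y => ?_)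
      rw [e]
      exact hne _ y huR'
  set m1 := min 1 (u ^ 2)
  set m2 := min 1 ((u + R) ^ 2)
  have hm1 : 0 < m1 := lt_min one_pos (by positivity)
  have hm2 : 0 < m2 := lt_min one_pos (by positivity)
  refine Integrable.mono' (g := fun y => R / (m1 * m2) * (1 + y ^ 2)⁻¹)
    (integrable_inv_one_add_sq.const_mul _) hc.aestronglyMeasurable (ae_of_all _ fun y => ?_)
  have n1 := norm_line u y
  have n2 := norm_line (u + R) y
  have hA : (u + y * I : ℂ) ≠ 0 := hne u y hu
  have hB : ((u + R : ℝ) + y * I : ℂ) ≠ 0 := hne _ y huR'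
  have e2 : hh R (u + y * I) = R * ((u + y * I) * ((u + R : ℝ) + y * I))⁻¹ := by
    unfold hh
    rw [e, inv_sub_inv hA hB]
    rw [div_eq_mul_inv]; congr 1; push_cast; ring
  rw [e2, norm_mul, norm_inv, norm_mul, norm_real, Real.norm_of_nonneg hR.le]
  set a := ‖(u + y * I : ℂ)‖
  set b := ‖((u + R : ℝ) + y * I : ℂ)‖
  have ha : 0 < a := norm_pos_iff.2 hA
  have hb : 0 < b := norm_pos_iff.2 hB
  have hY : 0 < 1 + y ^ 2 := by positivity
  have hab : m1 * m2 * (1 + y ^ 2) ≤ a * b := by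
    have hm1' : m1 ≤ 1 := min_le_left _ _
    have hm2' : m2 ≤ 1 := min_le_left _ _
    have h1 : (m1 * m2 * (1 + y ^ 2)) ^ 2 ≤ (a * b) ^ 2 := by
      have : (m1 * (1 + y ^ 2)) * (m2 * (1 + y ^ 2)) ≤ a ^ 2 * b ^ 2 :=
        mul_le_mul n1 n2 (by positivity) (by positivity)
      have h3 : m1 * m2 ≤ 1 := by nlinarith
      calc (m1 * m2 * (1 + y ^ 2)) ^ 2 = (m1 * m2) * ((m1 * (1 + y ^ 2)) * (m2 * (1 + y ^ 2))) := by ring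
        _ ≤ 1 * ((m1 * (1 + y ^ 2)) * (m2 * (1 + y ^ 2))) := by gcongr
        _ ≤ _ := by rw [mul_pow]; linarith
    exact (sq_le_sq₀ (by positivity) (by positivity)).1 h1
  calc R * (a * b)⁻¹ ≤ R * (m1 * m2 * (1 + y ^ 2))⁻¹ := by gcongr
    _ = _ := by rw [mul_inv]; ring

lemma hh_integral (R u : ℝ) (hR : 0 < R) (hu : u ≠ 0) (huR : -R < u) :
    ∫ y : ℝ, hh R (u + y * I) = ((u⁻¹ * |u| * Real.pi - Real.pi : ℝ) : ℂ) := by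
  have hi := hh_int R u hR hu huR
  have huR' : u + R ≠ 0 := by linarith
  have hn : ∫ y : ℝ, hh R (u + y * I) = ∫ y : ℝ, hh R (u + (-y : ℝ) * I) := by
    exact (integral_neg_eq_self (fun y : ℝ => hh R (u + y * I)) volume).symm
  have hi2 : Integrable (fun y : ℝ => hh R (u + (-y : ℝ) * I)) := hi.comp_neg
  have h2 : 2 * ∫ y : ℝ, hh R (u + y * I) = 2 * ((u⁻¹ * |u| * Real.pi - Real.pi : ℝ) : ℂ) := by
    obtain ⟨i1, e1⟩ := integral_re_aux u hu
    obtain ⟨i2, e2⟩ := integral_re_aux (u + R) huR'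
    have e3 : (u + R)⁻¹ * |u + R| * Real.pi = Real.pi := by
      rw [abs_of_pos (by linarith)]; field_simp
    rw [e3] at e2
    rw [← e1]
    conv_rhs => rw [← e2]
    have h22 : 2 * ∫ y : ℝ, hh R (u + y * I) =
        (∫ y : ℝ, hh R (u + y * I)) + ∫ y : ℝ, hh R (u + (-y : ℝ) * I) := by
      rw [← hn]; ring
    rw [h22, ← integral_add hi hi2, ← integral_sub i1 i2, ← integral_complex_ofReal, ← integral_const_mul]
    congr 1
    funext y
    unfold hh
    have q : ∀ v y : ℝ, v ≠ 0 → (v + y * I : ℂ)⁻¹ + (v + (-y : ℝ) * I : ℂ)⁻¹ = 2 * ((v / (v ^ 2 + y ^ 2) : ℝ) : ℂ) := by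
      intro v y hv
      have h1 : (v + y * I : ℂ) ≠ 0 := by
        intro h; apply hv; simpa using congrArg Complex.re h
      have h2 : (v + (-y : ℝ) * I : ℂ) ≠ 0 := by
        intro h; apply hv; simpa using congrArg Complex.re h
      have h3 : ((v : ℂ) ^ 2 + y ^ 2) = (v + y * I) * (v + (-y : ℝ) * I) := by
        push_cast; ring_nf; simp
      rw [inv_add_inv h1 h2, ← h3]
      push_cast; ring
    have q1 := q u y hu
    have q2 := q (u + R) y huR'
    have e : ∀ y : ℝ, (u + y * I + R : ℂ) = ((u + R : ℝ) + y * I : ℂ) := by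
      intro y; push_cast; ring
    rw [e, e]
    push_cast at q1 q2 ⊢
    linear_combination q1 - q2
  exact mul_left_cancel₀ two_ne_zero h2

end S13


namespace S13

open MeasureTheory Filter Topology

lemma line_cont (f : ℂ → ℂ) (α β u : ℝ) (h1 : α < u) (h2 : u < β)
    (hf : DifferentiableOn ℂ f {z | α < z.re ∧ z.re < β}) :
    Continuous (fun y : ℝ => f (u + y * I)) := by
  refine hf.continuousOn.comp_continuous (by fun_prop) (fun y => ?_)
  simp [h1, h2]

lemma line_int (lam : ℂ) (hl : 0 < lam.re) (f : ℂ → ℂ) (α β M u : ℝ) (ζ : ℂ) (h1 : α < u) (h2 : u < β)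
    (hf : DifferentiableOn ℂ f {z | α < z.re ∧ z.re < β})
    (hb : ∀ z : ℂ, α < z.re → z.re < β → ‖f z‖ ≤ M * (1 + z.im ^ 2)⁻¹)
    (hu : u ≠ ζ.re) (hu2 : |ζ.re - u| < lam.re) :
    Integrable (fun y : ℝ => f (u + y * I) * kern lam (ζ - (u + y * I))) := by
  have hl0 : lam ≠ 0 := by rintro rfl; simp at hl
  have hM : 0 ≤ M := by
    have := (norm_nonneg _).trans (hb u (by simpa using h1) (by simpa using h2))
    simpa using this
  obtain ⟨hu3, hu4⟩ := abs_lt.1 hu2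
  have hkb : ∃ C : ℝ, ∀ y : ℝ, ‖kern lam (ζ - (u + y * I))‖ ≤ C := by
    rcases lt_or_gt_of_ne hu with h | h
    · obtain ⟨C, -, hC⟩ := kern_bound lam (min (ζ.re - u) (lam.re - (ζ.re - u)))
        (lt_min (by linarith) (by linarith)) hl
      refine ⟨C, fun y => (hC _ ?_ ?_).1⟩
      · simp
      · have := min_le_right (ζ.re - u) (lam.re - (ζ.re - u))
        simp only [sub_re, add_re, ofReal_re, mul_re, I_re, mul_zero, ofReal_im, I_im, mul_one,
          sub_self, add_zero]
        linarith
    · obtain ⟨C, -, hC⟩ := kern_bound lam (min (u - ζ.re) (lam.re - (u - ζ.re)))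
        (lt_min (by linarith) (by linarith)) hl
      refine ⟨C, fun y => ?_⟩
      rw [← kern_periodic _ _ hl0]
      refine (hC _ ?_ ?_).1
      · have := min_le_right (u - ζ.re) (lam.re - (u - ζ.re))
        simp only [sub_re, add_re, ofReal_re, mul_re, I_re, mul_zero, ofReal_im, I_im, mul_one,
          sub_self, add_zero]
        linarith
      · have := min_le_left (u - ζ.re) (lam.re - (u - ζ.re))
        simp only [sub_re, add_re, ofReal_re, mul_re, I_re, mul_zero, ofReal_im, I_im, mul_one,
          sub_self, add_zero]
        linarith
  obtain ⟨C, hC⟩ := hkb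
  have hkc : Continuous (fun y : ℝ => kern lam (ζ - (u + y * I))) := by
    rw [continuous_iff_continuousAt]
    intro y
    refine ContinuousAt.comp (g := kern lam) (f := fun y : ℝ => ζ - (u + y * I)) ?_ (by fun_prop)
    refine (kern_diff lam _ hl ?_ ?_).continuousAt
    · intro h
      have := congrArg Complex.re h
      simp at this
      exact hu (by linarith)
    · simpa using hu2
  refine Integrable.mono' (g := fun y => M * C * (1 + y ^ 2)⁻¹)
    (integrable_inv_one_add_sq.const_mul _)
    ((line_cont f α β u h1 h2 hf).mul hkc).aestronglyMeasurable (ae_of_all _ fun y => ?_)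
  rw [norm_mul]
  have e1 := hb (u + y * I) (by simpa using h1) (by simpa using h2)
  have e2 := hC y
  simp at e1
  calc _ ≤ (M * (1 + y ^ 2)⁻¹) * C := mul_le_mul e1 e2 (norm_nonneg _) (by positivity)
    _ = _ := by ring

lemma far_im (lam : ℂ) (hl : 0 < lam.re) (ζ z : ℂ) (h : |ζ.re - z.re| ≤ lam.re)
    (hz : |ζ.im| + (normSq lam + lam.re * |lam.im|) / lam.re ≤ |z.im|) :
    1 ≤ |((ζ - z) / lam).im| := by
  have hl0 : lam ≠ 0 := by rintro rfl; simp at hl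
  have hn : 0 < normSq lam := normSq_pos.2 hl0
  have e : ((ζ - z) / lam).im = ((ζ.im - z.im) * lam.re - (ζ.re - z.re) * lam.im) / normSq lam := by
    rw [Complex.div_im]; simp; ring
  rw [e, abs_div, abs_of_pos hn, le_div_iff₀ hn, one_mul]
  have h1 : |ζ.im - z.im| * lam.re - |ζ.re - z.re| * |lam.im| ≤
      |(ζ.im - z.im) * lam.re - (ζ.re - z.re) * lam.im| := by
    rw [← abs_mul, ← abs_of_pos hl, ← abs_mul, abs_of_pos hl]
    exact abs_sub_abs_le_abs_sub _ _
  have h2 : |z.im| - |ζ.im| ≤ |ζ.im - z.im| := by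
    rw [abs_sub_comm]; exact abs_sub_abs_le_abs_sub _ _
  have h3 : (normSq lam + lam.re * |lam.im|) / lam.re ≤ |ζ.im - z.im| := by linarith
  rw [div_le_iff₀ hl] at h3
  have h4 := mul_le_mul_of_nonneg_right h (abs_nonneg lam.im)
  linarith

lemma fk_decay (lam : ℂ) (hl : 0 < lam.re) (f : ℂ → ℂ) (α β M : ℝ) (hM : 0 ≤ M) (ζ : ℂ)
    (hb : ∀ z : ℂ, α < z.re → z.re < β → ‖f z‖ ≤ M * (1 + z.im ^ 2)⁻¹) :
    ∃ T0 : ℝ, ∀ z : ℂ, α < z.re → z.re < β → |ζ.re - z.re| ≤ lam.re → T0 ≤ |z.im| →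
      ‖f z * kern lam (ζ - z)‖ ≤ (2 * M) / |z.im| := by
  refine ⟨max 1 (|ζ.im| + (normSq lam + lam.re * |lam.im|) / lam.re), fun z h1 h2 h3 h4 => ?_⟩
  have k := kern_far lam _ (far_im lam hl ζ z h3 (le_trans (le_max_right _ _) h4))
  have h5 : 1 ≤ |z.im| := le_trans (le_max_left _ _) h4
  have hb' := hb z h1 h2
  rw [norm_mul]
  have h6 : (1 + z.im ^ 2)⁻¹ ≤ |z.im|⁻¹ := by
    rw [← sq_abs]
    gcongr
    nlinarith
  calc _ ≤ (M * (1 + z.im ^ 2)⁻¹) * 2 := mul_le_mul hb' k (norm_nonneg _) (by positivity)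
    _ ≤ (M * |z.im|⁻¹) * 2 := by gcongr
    _ = _ := by ring

lemma contour_indep (lam : ℂ) (hl : 0 < lam.re) (f : ℂ → ℂ) (α β M u1 u2 : ℝ) (ζ : ℂ)
    (h1 : α < u1) (h12 : u1 ≤ u2) (h2 : u2 < β)
    (hf : DifferentiableOn ℂ f {z | α < z.re ∧ z.re < β})
    (hb : ∀ z : ℂ, α < z.re → z.re < β → ‖f z‖ ≤ M * (1 + z.im ^ 2)⁻¹)
    (hz1 : u2 < ζ.re) (hz2 : ζ.re - u1 < lam.re) :
    ∫ y : ℝ, f (u1 + y * I) * kern lam (ζ - (u1 + y * I)) =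
      ∫ y : ℝ, f (u2 + y * I) * kern lam (ζ - (u2 + y * I)) := by
  have hM : 0 ≤ M := by
    have := (norm_nonneg _).trans (hb u1 (by simpa using h1) (by simp; linarith))
    simpa using this
  obtain ⟨T0, hT⟩ := fk_decay lam hl f α β M hM ζ hb
  refine strip_eq (fun z => f z * kern lam (ζ - z)) (max α (ζ.re - lam.re)) (min β ζ.re) u1 u2
    (max_lt h1 (by linarith)) h12 (lt_min h2 hz1) ?_
    (line_int lam hl f α β M u1 ζ h1 (by linarith) hf hb (by linarith) ?_)
    (line_int lam hl f α β M u2 ζ (by linarith) h2 hf hb (by linarith) ?_) (2 * M) T0 ?_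
  · intro z hz
    simp only [Set.mem_ofPred_eq, max_lt_iff, lt_min_iff] at hz
    refine DifferentiableAt.differentiableWithinAt ?_
    refine DifferentiableAt.mul ?_ ?_
    · refine hf.differentiableAt (IsOpen.mem_nhds ?_ ⟨hz.1.1, hz.2.1⟩)
      exact (isOpen_lt continuous_const continuous_re).inter (isOpen_lt continuous_re continuous_const)
    · refine DifferentiableAt.comp (g := kern lam) z ?_ (by fun_prop)
      exact kern_diff' lam _ (by simp; linarith) (by simp; linarith)
  · rw [abs_of_pos (by linarith)]; exact hz2
  · rw [abs_of_pos (by linarith)]; linarith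
  · intro z hz1' hz2' hz3
    refine hT z (by linarith) (by linarith) ?_ hz3
    rw [abs_of_pos (by linarith)]; linarith

lemma kern_res (lam ζ : ℂ) (hl0 : lam ≠ 0) :
    Tendsto (fun z => (z - ζ) * kern lam (ζ - z)) (𝓝[≠] ζ) (𝓝 (lam / (2 * (Real.pi : ℂ) * I))) := by
  have hd : HasDerivAt (fun z : ℂ => 1 - cexp (2 * (Real.pi : ℂ) * I * ((ζ - z) / lam)))
      (2 * (Real.pi : ℂ) * I / lam) ζ := by
    have h1 : HasDerivAt (fun z : ℂ => 2 * (Real.pi : ℂ) * I * ((ζ - z) / lam))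
        (2 * (Real.pi : ℂ) * I * (-1 / lam)) ζ :=
      (((hasDerivAt_id ζ).const_sub ζ).div_const lam).const_mul _
    have h2 := (h1.cexp).const_sub 1
    refine h2.congr_deriv ?_
    simp
    ring
  have h3 := (hasDerivAt_iff_tendsto_slope.1 hd).inv₀ (by
    refine div_ne_zero Complex.two_pi_I_ne_zero hl0)
  rw [inv_div] at h3
  refine h3.congr (fun z => ?_)
  simp only [slope, vsub_eq_sub, smul_eq_mul, kern]
  simp [mul_comm]

lemma hh_decay (R : ℝ) (ζ z : ℂ) (h : 2 * |ζ.im| + 1 ≤ |z.im|) : ‖hh R (z - ζ)‖ ≤ 4 / |z.im| := by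
  have h1 : |z.im| / 2 ≤ |z.im - ζ.im| := by
    have := abs_sub_abs_le_abs_sub z.im ζ.im
    linarith
  have h0 : 0 < |z.im| := by linarith [abs_nonneg ζ.im]
  have a1 : ‖(z - ζ)⁻¹‖ ≤ (|z.im| / 2)⁻¹ := by
    rw [norm_inv]
    have := abs_im_le_norm (z - ζ)
    rw [sub_im] at this
    gcongr
    linarith
  have a2 : ‖(z - ζ + R)⁻¹‖ ≤ (|z.im| / 2)⁻¹ := by
    rw [norm_inv]
    have := abs_im_le_norm (z - ζ + R)
    simp only [add_im, sub_im, ofReal_im, add_zero] at this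
    gcongr
    linarith
  unfold hh
  refine (norm_sub_le _ _).trans ?_
  have : 4 / |z.im| = (|z.im| / 2)⁻¹ + (|z.im| / 2)⁻¹ := by field_simp; norm_num
  linarith

lemma contour_jump (lam : ℂ) (hl : 0 < lam.re) (f : ℂ → ℂ) (α β M u1 u2 : ℝ) (ζ : ℂ)
    (h1 : α < u1) (h2 : u2 < β)
    (hf : DifferentiableOn ℂ f {z | α < z.re ∧ z.re < β})
    (hb : ∀ z : ℂ, α < z.re → z.re < β → ‖f z‖ ≤ M * (1 + z.im ^ 2)⁻¹)
    (hz1 : u1 < ζ.re) (hz2 : ζ.re < u2) (hz3 : ζ.re - u1 < lam.re) (hz4 : u2 - ζ.re < lam.re) :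
    (I / lam) * (∫ y : ℝ, f (u2 + y * I) * kern lam (ζ - (u2 + y * I))) -
      (I / lam) * (∫ y : ℝ, f (u1 + y * I) * kern lam (ζ - (u1 + y * I))) = f ζ := by
  have hl0 : lam ≠ 0 := by rintro rfl; simp at hl
  have hM : 0 ≤ M := by
    have := (norm_nonneg _).trans (hb u1 (by simpa using h1) (by simp; linarith))
    simpa using this
  obtain ⟨T0, hT⟩ := fk_decay lam hl f α β M hM ζ hb
  set r : ℂ := lam / (2 * (Real.pi : ℂ) * I) with hr
  set G : ℂ → ℂ := fun z => f z * kern lam (ζ - z) - f ζ * r * hh lam.re (z - ζ) with hG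
  set α' := max α (ζ.re - lam.re)
  set β' := min β (ζ.re + lam.re)
  have hs_open : IsOpen {z : ℂ | α < z.re ∧ z.re < β} :=
    (isOpen_lt continuous_const continuous_re).inter (isOpen_lt continuous_re continuous_const)
  have hs'_open : IsOpen {z : ℂ | α' < z.re ∧ z.re < β'} :=
    (isOpen_lt continuous_const continuous_re).inter (isOpen_lt continuous_re continuous_const)
  have hζ : ζ ∈ {z : ℂ | α' < z.re ∧ z.re < β'} :=
    ⟨max_lt (by linarith) (by linarith), lt_min (by linarith) (by linarith)⟩
  have hGd : DifferentiableOn ℂ G ({z : ℂ | α' < z.re ∧ z.re < β'} \ {ζ}) := by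
    rintro z ⟨hz, hzζ⟩
    simp only [Set.mem_ofPred_eq, α', β', max_lt_iff, lt_min_iff] at hz
    have hne : z - ζ ≠ 0 := sub_ne_zero.2 hzζ
    have hne' : ζ - z ≠ 0 := sub_ne_zero.2 (Ne.symm hzζ)
    refine DifferentiableAt.differentiableWithinAt ?_
    refine DifferentiableAt.sub (DifferentiableAt.mul ?_ ?_) (DifferentiableAt.mul (by fun_prop) ?_)
    · exact hf.differentiableAt (hs_open.mem_nhds ⟨hz.1.1, hz.2.1⟩)
    · refine DifferentiableAt.comp (g := kern lam) z ?_ (by fun_prop)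
      refine kern_diff lam _ hl hne' ?_
      rw [abs_lt]
      constructor <;> simp <;> linarith
    · unfold hh
      refine DifferentiableAt.sub (DifferentiableAt.inv (by fun_prop) hne)
        (DifferentiableAt.inv (by fun_prop) ?_)
      intro h
      have := congrArg Complex.re h
      simp at this
      linarith
  have hres : Tendsto (fun z => (z - ζ) * G z) (𝓝[≠] ζ) (𝓝 0) := by
    have t1 := kern_res lam ζ hl0
    have t2 : Tendsto f (𝓝[≠] ζ) (𝓝 (f ζ)) :=
      ((hf.differentiableAt (hs_open.mem_nhds ⟨by linarith, by linarith⟩)).continuousAt.tendsto).mono_left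
        nhdsWithin_le_nhds
    have t3 : Tendsto (fun z : ℂ => 1 - (z - ζ) * (z - ζ + lam.re)⁻¹) (𝓝[≠] ζ) (𝓝 1) := by
      have : ContinuousAt (fun z : ℂ => 1 - (z - ζ) * (z - ζ + lam.re)⁻¹) ζ := by
        refine ContinuousAt.sub (by fun_prop) (ContinuousAt.mul (by fun_prop) (ContinuousAt.inv₀ (by fun_prop) ?_))
        simpa using hl.ne'
      have t := this.tendsto.mono_left (nhdsWithin_le_nhds (s := {ζ}ᶜ))
      simpa using t
    have t4 := (t2.mul t1).sub (t3.const_mul (f ζ * r))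
    rw [mul_one, sub_self] at t4
    refine t4.congr' ?_
    filter_upwards [self_mem_nhdsWithin] with z hz
    have hne : z - ζ ≠ 0 := sub_ne_zero.2 hz
    simp only [hG, hh]
    have : (z - ζ) * (z - ζ)⁻¹ = 1 := mul_inv_cancel₀ hne
    linear_combination (f ζ * r) * this
  have ho : (fun z => G z - G ζ) =o[𝓝[≠] ζ] fun z => (z - ζ)⁻¹ := by
    rw [Asymptotics.isLittleO_iff_tendsto']
    · have t5 : Tendsto (fun z : ℂ => (z - ζ) * G ζ) (𝓝[≠] ζ) (𝓝 0) := by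
        have : ContinuousAt (fun z : ℂ => (z - ζ) * G ζ) ζ := by fun_prop
        have t := this.tendsto.mono_left (nhdsWithin_le_nhds (s := {ζ}ᶜ))
        simpa using t
      have t6 := hres.sub t5
      rw [sub_zero] at t6
      refine t6.congr (fun z => ?_)
      rw [div_inv_eq_mul]; ring
    · filter_upwards [self_mem_nhdsWithin] with z hz h
      exact absurd h (inv_ne_zero (sub_ne_zero.2 hz))
  have hGd' := differentiableOn_update_limUnder_of_isLittleO (hs'_open.mem_nhds hζ) hGd ho
  set G' := Function.update G ζ (limUnder (𝓝[≠] ζ) G)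
  have hGG : ∀ u : ℝ, u ≠ ζ.re → ∀ y : ℝ, G' (u + y * I) = G (u + y * I) := by
    intro u hu y
    refine Function.update_of_ne ?_ _ _
    intro h
    apply hu
    simpa using congrArg Complex.re h
  have hline : ∀ u y : ℝ, (u + y * I : ℂ) - ζ = ((u - ζ.re : ℝ) + (y - ζ.im : ℝ) * I : ℂ) := by
    intro u y
    apply Complex.ext <;> simp
  have hhi : ∀ u : ℝ, u ≠ ζ.re → -lam.re < u - ζ.re →
      Integrable (fun y : ℝ => hh lam.re (u + y * I - ζ)) := by
    intro u hu hu2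
    simp_rw [hline]
    exact (hh_int lam.re (u - ζ.re) hl (sub_ne_zero.2 hu) hu2).comp_sub_right ζ.im
  have hhe : ∀ u : ℝ, u ≠ ζ.re → -lam.re < u - ζ.re →
      ∫ y : ℝ, hh lam.re (u + y * I - ζ) =
        (((u - ζ.re)⁻¹ * |u - ζ.re| * Real.pi - Real.pi : ℝ) : ℂ) := by
    intro u hu hu2
    simp_rw [hline]
    rw [← hh_integral lam.re (u - ζ.re) hl (sub_ne_zero.2 hu) hu2]
    exact integral_sub_right_eq_self (fun y : ℝ => hh lam.re ((u - ζ.re : ℝ) + (y : ℝ) * I)) ζ.im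
  have i1 := line_int lam hl f α β M u1 ζ h1 (by linarith) hf hb (by linarith)
    (by rw [abs_of_pos (by linarith)]; exact hz3)
  have i2 := line_int lam hl f α β M u2 ζ (by linarith) h2 hf hb (by linarith)
    (by rw [abs_of_neg (by linarith)]; linarith)
  have j1 := (hhi u1 (by linarith) (by linarith)).const_mul (f ζ * r)
  have j2 := (hhi u2 (by linarith) (by linarith)).const_mul (f ζ * r)
  have eq := strip_eq G' α' β' u1 u2 (max_lt h1 (by linarith)) (by linarith)
    (lt_min h2 (by linarith)) hGd'
    (by simp_rw [hGG u1 (by linarith)]; exact i1.sub j1)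
    (by simp_rw [hGG u2 (by linarith)]; exact i2.sub j2)
    (2 * M + ‖f ζ * r‖ * 4) (max T0 (2 * |ζ.im| + 1)) (by
      intro z hz1' hz2' hz3'
      have hT1 : T0 ≤ |z.im| := (le_max_left _ _).trans hz3'
      have hT2 : 2 * |ζ.im| + 1 ≤ |z.im| := (le_max_right _ _).trans hz3'
      have hne : z ≠ ζ := by
        rintro rfl
        linarith [abs_nonneg z.im]
      have : G' z = G z := Function.update_of_ne hne _ _
      rw [this]
      have b1 := hT z (by linarith) (by linarith) (by rw [abs_le]; constructor <;> linarith) hT1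
      have b2 := hh_decay lam.re ζ z hT2
      refine (norm_sub_le _ _).trans ?_
      rw [norm_mul (f ζ * r)]
      have b3 := mul_le_mul_of_nonneg_left b2 (norm_nonneg (f ζ * r))
      have b4 : (2 * M + ‖f ζ * r‖ * 4) / |z.im| = 2 * M / |z.im| + ‖f ζ * r‖ * (4 / |z.im|) := by ring
      linarith)
  simp_rw [hGG u1 (show u1 ≠ ζ.re by linarith), hGG u2 (show u2 ≠ ζ.re by linarith)] at eq
  simp only [hG] at eq
  rw [integral_sub i1 j1, integral_sub i2 j2, integral_const_mul, integral_const_mul,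
    hhe u1 (by linarith) (by linarith), hhe u2 (by linarith) (by linarith)] at eq
  have s1 : (u1 - ζ.re)⁻¹ * |u1 - ζ.re| = -1 := by
    rw [abs_of_neg (by linarith), mul_neg, inv_mul_cancel₀ (by linarith)]
  have s2 : (u2 - ζ.re)⁻¹ * |u2 - ζ.re| = 1 := by
    rw [abs_of_pos (by linarith), inv_mul_cancel₀ (by linarith)]
  rw [s1, s2] at eq
  have hpi : (Real.pi : ℂ) ≠ 0 := by exact_mod_cast Real.pi_ne_zero
  have hrr : r * (2 * (Real.pi : ℂ) * I) = lam := by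
    rw [hr]; exact div_mul_cancel₀ _ Complex.two_pi_I_ne_zero
  push_cast at eq
  have fin : (I / lam) * (f ζ * r * (2 * Real.pi)) = f ζ := by
    have : (I / lam) * (f ζ * r * (2 * Real.pi)) = f ζ * ((r * (2 * (Real.pi : ℂ) * I)) / lam) := by ring
    rw [this, hrr, div_self hl0, mul_one]
  linear_combination (-(I / lam)) * eq + fin

end S13


namespace S13

open MeasureTheory Filter Topology

lemma param_hol (F : ℂ × ℂ → ℝ → ℂ) (U : Set (ℂ × ℂ)) (hU : IsOpen U) (bound : ℝ → ℝ)
    (hbi : Integrable bound)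
    (hc : ∀ p ∈ U, Continuous (F p)) (hd : ∀ y, DifferentiableOn ℂ (fun p => F p y) U)
    (hb : ∀ p ∈ U, ∀ y, ‖F p y‖ ≤ bound y) :
    DifferentiableOn ℂ (fun p => ∫ y, F p y) U := by
  intro p0 hp0
  refine DifferentiableAt.differentiableWithinAt ?_
  obtain ⟨r, hr, hball⟩ := Metric.isOpen_iff.1 hU p0 hp0
  have hda : ∀ y, ∀ p ∈ U, HasFDerivAt (fun p => F p y) (fderiv ℂ (fun p => F p y) p) p :=
    fun y p hp => ((hd y).differentiableAt (hU.mem_nhds hp)).hasFDerivAt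
  have hbn : ∀ y, 0 ≤ bound y := fun y => (norm_nonneg _).trans (hb p0 hp0 y)
  have hdir : ∀ v : ℂ × ℂ, Measurable (fun y => fderiv ℂ (fun p => F p y) p0 v) := by
    intro v
    set s : ℕ → ℂ := fun n => ((n : ℂ) + 1)⁻¹
    have hs0 : Tendsto s atTop (𝓝 0) := by
      have := tendsto_one_div_add_atTop_nhds_zero_nat (𝕜 := ℂ)
      simpa [s] using this
    have hsne : ∀ n, s n ≠ 0 := fun n => inv_ne_zero (Nat.cast_add_one_ne_zero n)
    have hev : ∀ᶠ n in atTop, p0 + s n • v ∈ U := by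
      have : Tendsto (fun n => p0 + s n • v) atTop (𝓝 (p0 + (0 : ℂ) • v)) :=
        tendsto_const_nhds.add (hs0.smul_const v)
      rw [zero_smul, add_zero] at this
      exact this.eventually (hU.mem_nhds hp0)
    obtain ⟨N, hN⟩ := eventually_atTop.1 hev
    refine measurable_of_tendsto_metrizable
      (f := fun n y => (s (n + N))⁻¹ * (F (p0 + s (n + N) • v) y - F p0 y)) ?_ ?_
    · intro n
      have h1 := (hc _ (hN (n + N) (by omega))).measurable
      have h2 := (hc _ hp0).measurable
      fun_prop
    · rw [tendsto_pi_nhds]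
      intro y
      have h1 : HasDerivAt (fun t : ℂ => F (p0 + t • v) y) (fderiv ℂ (fun p => F p y) p0 v) 0 := by
        have h2 : HasDerivAt (fun t : ℂ => p0 + t • v) v 0 := by
          simpa using ((hasDerivAt_id (0 : ℂ)).smul_const v).const_add p0
        have h3 := hda y p0 hp0
        have h4 : HasFDerivAt (fun p => F p y) (fderiv ℂ (fun p => F p y) p0) (p0 + (0 : ℂ) • v) := by
          simpa using h3
        exact h4.comp_hasDerivAt (0 : ℂ) h2
      have h5 := hasDerivAt_iff_tendsto_slope.1 h1
      have h6 : Tendsto (fun n => s (n + N)) atTop (𝓝[≠] 0) := by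
        rw [tendsto_nhdsWithin_iff]
        exact ⟨hs0.comp (tendsto_add_atTop_nat N), Eventually.of_forall fun n => hsne _⟩
      have h7 := h5.comp h6
      refine h7.congr (fun n => ?_)
      simp [slope]
  have hmeas : Measurable (fun y => fderiv ℂ (fun p => F p y) p0) := by
    have e : (fun y => fderiv ℂ (fun p => F p y) p0) = fun y =>
        (fderiv ℂ (fun p => F p y) p0 (1, 0)) • (ContinuousLinearMap.fst ℂ ℂ ℂ) +
        (fderiv ℂ (fun p => F p y) p0 (0, 1)) • (ContinuousLinearMap.snd ℂ ℂ ℂ) := by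
      funext y
      ext <;> simp
    rw [e]
    have h1 := hdir (1, 0)
    have h2 := hdir (0, 1)
    exact (h1.smul_const _).add (h2.smul_const _)
  refine (hasFDerivAt_integral_of_dominated_of_fderiv_le (𝕜 := ℂ) (s := Metric.ball p0 (r / 2))
    (F' := fun p y => fderiv ℂ (fun p => F p y) p) (bound := fun y => bound y * (4 / r))
    (Metric.ball_mem_nhds _ (by positivity)) ?_ ?_ hmeas.aestronglyMeasurable ?_ ?_ ?_).differentiableAt
  · filter_upwards [hU.mem_nhds hp0] with p hp
    exact (hc p hp).aestronglyMeasurable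
  · exact hbi.mono' (hc p0 hp0).aestronglyMeasurable (ae_of_all _ (hb p0 hp0))
  · refine ae_of_all _ fun y p hp => ?_
    refine ContinuousLinearMap.opNorm_le_bound _ (mul_nonneg (hbn y) (by positivity)) (fun v => ?_)
    by_cases hv : v = 0
    · simp [hv]
    have hv' : 0 < ‖v‖ := norm_pos_iff.2 hv
    have hR : 0 < r / (4 * ‖v‖) := by positivity
    have hin : ∀ t : ℂ, ‖t‖ ≤ r / (4 * ‖v‖) → p + t • v ∈ U := by
      intro t ht
      apply hball
      rw [Metric.mem_ball, dist_eq_norm] at *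
      have h1 : ‖t • v‖ ≤ r / 4 := by
        rw [norm_smul]
        calc ‖t‖ * ‖v‖ ≤ r / (4 * ‖v‖) * ‖v‖ := by gcongr
          _ = r / 4 := by field_simp
      have h2 : p + t • v - p0 = (p - p0) + t • v := by abel
      rw [h2]
      have := norm_add_le (p - p0) (t • v)
      linarith
    have h2 : ∀ t : ℂ, HasDerivAt (fun t : ℂ => p + t • v) v t := fun t => by
      simpa using ((hasDerivAt_id t).smul_const v).const_add p
    have h3 : ∀ t : ℂ, ‖t‖ ≤ r / (4 * ‖v‖) →
        HasDerivAt (fun t : ℂ => F (p + t • v) y) (fderiv ℂ (fun p => F p y) (p + t • v) v) t :=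
      fun t ht => by
        have h := hda y _ (hin t ht)
        exact h.comp_hasDerivAt t (h2 t)
    have h4 := norm_deriv_le_of_forall_mem_sphere_norm_le (c := 0) (C := bound y)
      (f := fun t : ℂ => F (p + t • v) y) hR
      (by
        apply DifferentiableOn.diffContOnCl
        intro t ht
        rw [closure_ball _ hR.ne'] at ht
        exact (h3 t (by simpa using ht)).differentiableAt.differentiableWithinAt)
      (fun t ht => hb _ (hin t (by simp at ht; exact ht.le)) y)
    rw [(h3 0 (by simpa using hR.le)).deriv] at h4
    simp only [zero_smul, add_zero] at h4
    refine h4.trans (le_of_eq ?_)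
    field_simp
  · exact hbi.mul_const _
  · refine ae_of_all _ fun y p hp => ?_
    refine hda y p (hball (Metric.ball_subset_ball (by linarith) hp))

/-- generic strip -/
def st (lo hi δ : ℝ) : Set (ℂ × ℂ) :=
  {p : ℂ × ℂ | 0 < ‖p.1‖ ∧ ‖p.1‖ ≤ δ ∧ Real.log ‖p.1‖ + lo ≤ p.2.re ∧
    p.2.re ≤ Real.log ‖p.1‖ + hi}

/-- generic open strip -/
def ost (lo hi δ : ℝ) : Set (ℂ × ℂ) :=
  {p : ℂ × ℂ | 0 < ‖p.1‖ ∧ ‖p.1‖ < δ ∧ Real.log ‖p.1‖ + lo < p.2.re ∧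
    p.2.re < Real.log ‖p.1‖ + hi}

/-- relative abscissa -/
noncomputable def XX (p : ℂ × ℂ) : ℝ := p.2.re - Real.log ‖p.1‖

lemma XX_cont (p : ℂ × ℂ) (hp : 0 < ‖p.1‖) : ContinuousAt XX p := by
  unfold XX
  refine ContinuousAt.sub (by fun_prop) (ContinuousAt.log (by fun_prop) hp.ne')

lemma mem_st {lo hi δ : ℝ} {p : ℂ × ℂ} :
    p ∈ st lo hi δ ↔ 0 < ‖p.1‖ ∧ ‖p.1‖ ≤ δ ∧ lo ≤ XX p ∧ XX p ≤ hi := by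
  unfold st XX
  simp only [Set.mem_ofPred_eq]
  constructor <;> rintro ⟨h1, h2, h3, h4⟩ <;> refine ⟨h1, h2, ?_, ?_⟩ <;> linarith

lemma mem_ost {lo hi δ : ℝ} {p : ℂ × ℂ} :
    p ∈ ost lo hi δ ↔ 0 < ‖p.1‖ ∧ ‖p.1‖ < δ ∧ lo < XX p ∧ XX p < hi := by
  unfold ost XX
  simp only [Set.mem_ofPred_eq]
  constructor <;> rintro ⟨h1, h2, h3, h4⟩ <;> refine ⟨h1, h2, ?_, ?_⟩ <;> linarith

lemma ost_nhds {lo hi δ : ℝ} {p : ℂ × ℂ} (hp : p ∈ ost lo hi δ) : ost lo hi δ ∈ 𝓝 p := by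
  rw [mem_ost] at hp
  obtain ⟨h1, h2, h3, h4⟩ := hp
  have hX := XX_cont p h1
  have hn : ContinuousAt (fun p : ℂ × ℂ => ‖p.1‖) p := by fun_prop
  filter_upwards [hn.eventually_const_lt h1, hn.eventually_lt_const h2,
    hX.eventually_const_lt h3, hX.eventually_lt_const h4] with x a b c d
  exact mem_ost.2 ⟨a, b, c, d⟩

lemma ost_open (lo hi δ : ℝ) : IsOpen (ost lo hi δ) :=
  isOpen_iff_mem_nhds.2 fun _ hp => ost_nhds hp

lemma ost_sub_st (lo hi δ : ℝ) : ost lo hi δ ⊆ st lo hi δ := by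
  intro p hp
  rw [mem_ost] at hp
  rw [mem_st]
  exact ⟨hp.1, hp.2.1.le, hp.2.2.1.le, hp.2.2.2.le⟩

lemma interior_st (lo hi δ : ℝ) : interior (st lo hi δ) = ost lo hi δ := by
  apply Set.Subset.antisymm
  · intro p hp
    have hps := mem_st.1 (interior_subset hp)
    have hnh : st lo hi δ ∈ 𝓝 p := mem_interior_iff_mem_nhds.1 hp
    obtain ⟨h1, h2, h3, h4⟩ := hps
    have hc1 : Tendsto (fun t : ℝ => ((1 + t : ℝ) • p.1, p.2)) (𝓝[>] 0) (𝓝 p) := by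
      have : ContinuousAt (fun t : ℝ => ((1 + t : ℝ) • p.1, p.2)) 0 := by fun_prop
      have := this.tendsto.mono_left (nhdsWithin_le_nhds (s := Set.Ioi 0))
      simpa using this
    have hc2 : Tendsto (fun t : ℝ => (p.1, p.2 - (t : ℂ))) (𝓝[>] 0) (𝓝 p) := by
      have : ContinuousAt (fun t : ℝ => (p.1, p.2 - (t : ℂ))) 0 := by fun_prop
      have := this.tendsto.mono_left (nhdsWithin_le_nhds (s := Set.Ioi 0))
      simpa using this
    have hc3 : Tendsto (fun t : ℝ => (p.1, p.2 + (t : ℂ))) (𝓝[>] 0) (𝓝 p) := by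
      have : ContinuousAt (fun t : ℝ => (p.1, p.2 + (t : ℂ))) 0 := by fun_prop
      have := this.tendsto.mono_left (nhdsWithin_le_nhds (s := Set.Ioi 0))
      simpa using this
    obtain ⟨t, ⟨⟨a1, a2⟩, a3⟩, a4⟩ := (((hc1.eventually hnh).and (hc2.eventually hnh)).and
      (hc3.eventually hnh) |>.and self_mem_nhdsWithin).exists
    have ht : 0 < t := a4
    replace a1 := (mem_st (p := ((1 + t : ℝ) • p.1, p.2))).1 a1
    replace a2 := (mem_st (p := (p.1, p.2 - (t : ℂ)))).1 a2
    replace a3 := (mem_st (p := (p.1, p.2 + (t : ℂ)))).1 a3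
    refine mem_ost.2 ⟨h1, ?_, ?_, ?_⟩
    · have := a1.2.1
      simp only [norm_smul, Real.norm_eq_abs] at this
      rw [abs_of_pos (by linarith)] at this
      nlinarith
    · have := a2.2.2.1
      simp [XX] at this ⊢
      linarith
    · have := a3.2.2.2
      simp [XX] at this ⊢
      linarith
  · exact interior_maximal (ost_sub_st _ _ _) (ost_open _ _ _)

lemma slice_hol (g : ℂ × ℂ → ℂ) (lo hi δ : ℝ) (hc : ContinuousOn g (st lo hi δ))
    (hd : DifferentiableOn ℂ g (ost lo hi δ)) (c : ℂ) (hc0 : 0 < ‖c‖) (hcδ : ‖c‖ ≤ δ) :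
    DifferentiableOn ℂ (fun η => g (c, η))
      {z : ℂ | Real.log ‖c‖ + lo < z.re ∧ z.re < Real.log ‖c‖ + hi} := by
  set U := {z : ℂ | Real.log ‖c‖ + lo < z.re ∧ z.re < Real.log ‖c‖ + hi} with hUdef
  have hU : IsOpen U :=
    (isOpen_lt continuous_const continuous_re).inter (isOpen_lt continuous_re continuous_const)
  let T : ℝ → ℂ → ℂ := fun r η => g (r • c, η + (Real.log r : ℝ))
  have hXr : ∀ (r : ℝ) (η : ℂ), 0 < r → XX (r • c, η + (Real.log r : ℝ)) = XX (c, η) := by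
    intro r η hr
    simp only [XX, norm_smul, Real.norm_eq_abs, abs_of_pos hr]
    rw [Real.log_mul hr.ne' hc0.ne']
    simp
    ring
  have hT1 : T 1 = fun η => g (c, η) := by
    funext η; simp [T]
  have hXU : ∀ η ∈ U, lo < XX (c, η) ∧ XX (c, η) < hi := by
    intro η hη
    simp only [XX]
    constructor
    · linarith [hη.1]
    · linarith [hη.2]
  have htl : TendstoLocallyUniformlyOn T (fun η => g (c, η)) (𝓝[Set.Ico (1 / 2) 1] 1) U := by
    rw [tendstoLocallyUniformlyOn_iff_forall_isCompact hU]
    intro K hKU hK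
    have hco : ContinuousOn ↿T (Set.Icc (1 / 2) 1 ×ˢ K) := by
      refine hc.comp (f := fun q : ℝ × ℂ => (q.1 • c, q.2 + (Real.log q.1 : ℝ))) ?_ ?_
      · intro q hq
        have : q.1 ≠ 0 := by have := hq.1.1; intro h; rw [h] at this; norm_num at this
        refine ContinuousAt.continuousWithinAt ?_
        refine ContinuousAt.prodMk (by fun_prop) (ContinuousAt.add (by fun_prop) ?_)
        exact Complex.continuous_ofReal.continuousAt.comp (ContinuousAt.log (by fun_prop) this)
      · intro q hq
        have hq1 : 0 < q.1 := by have := hq.1.1; linarith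
        rw [mem_st, hXr _ _ hq1]
        have := hXU _ (hKU hq.2)
        refine ⟨?_, ?_, this.1.le, this.2.le⟩
        · simp only [norm_smul, Real.norm_eq_abs, abs_of_pos hq1]; positivity
        · simp only [norm_smul, Real.norm_eq_abs, abs_of_pos hq1]
          have := hq.1.2
          nlinarith
    have hu := (isCompact_Icc.prod hK).uniformContinuousOn_of_continuous hco
    have := hu.tendstoUniformlyOn (x := 1) ⟨by norm_num, le_refl 1⟩
    rw [hT1] at this
    intro V hV
    exact (this V hV).filter_mono (nhdsWithin_mono _ Set.Ico_subset_Icc_self)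
  have hne : (𝓝[Set.Ico (1 / 2 : ℝ) 1] 1).NeBot := by
    rw [← mem_closure_iff_nhdsWithin_neBot, closure_Ico (by norm_num)]
    constructor <;> norm_num
  refine htl.differentiableOn ?_ hU
  filter_upwards [self_mem_nhdsWithin] with r hr
  have hr0 : 0 < r := by linarith [hr.1]
  refine hd.comp (f := fun η : ℂ => (r • c, η + (Real.log r : ℝ))) (by fun_prop) ?_
  intro η hη
  rw [mem_ost, hXr _ _ hr0]
  have := hXU _ hη
  refine ⟨?_, ?_, this.1, this.2⟩
  · simp only [norm_smul, Real.norm_eq_abs, abs_of_pos hr0]; positivity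
  · simp only [norm_smul, Real.norm_eq_abs, abs_of_pos hr0]
    have := hr.2
    nlinarith

end S13


namespace S13

open MeasureTheory Filter Topology

lemma periodic_zero (lam : ℂ) (hl : 0 < lam.re) (h : ℂ → ℂ) (lo hi : ℝ) (hw : lam.re < hi - lo)
    (hd : DifferentiableOn ℂ h {z | lo < z.re ∧ z.re < hi + lam.re})
    (hper : ∀ z : ℂ, lo ≤ z.re → z.re ≤ hi → h (z + lam) = h z)
    (M : ℝ) (hb : ∀ z : ℂ, lo ≤ z.re → z.re ≤ hi + lam.re → ‖h z‖ ≤ M)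
    (N : ℝ) (hdec : ∀ z : ℂ, lo ≤ z.re → z.re ≤ hi + lam.re → (z / lam).im ≤ -1 →
      ‖h z‖ * Real.sqrt |(z / lam).im| ≤ N) :
    ∀ z : ℂ, lo ≤ z.re → z.re ≤ hi + lam.re → h z = 0 := by
  have hl0 : lam ≠ 0 := by rintro rfl; simp at hl
  set l := lam.re
  set x1 := lo + l / 2 with hx1
  let n : ℂ → ℤ := fun z => ⌊(z.re - x1) / l⌋
  let H : ℂ → ℂ := fun z => h (z - n z * lam)
  have hn1 : ∀ z : ℂ, x1 ≤ z.re - n z * l := by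
    intro z
    have := Int.floor_le ((z.re - x1) / l)
    rw [le_div_iff₀ hl] at this
    simp only [n]; linarith
  have hn2 : ∀ z : ℂ, z.re - n z * l < x1 + l := by
    intro z
    have := Int.lt_floor_add_one ((z.re - x1) / l)
    rw [div_lt_iff₀ hl] at this
    simp only [n]; linarith
  have hre : ∀ (z : ℂ) (k : ℤ), (z - k * lam).re = z.re - k * l := by
    intro z k; simp [l]
  have him : ∀ (z : ℂ) (k : ℤ), ((z - k * lam) / lam).im = (z / lam).im := by
    intro z k
    rw [sub_div, mul_div_cancel_right₀ _ hl0]; simp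
  have claim : ∀ (k : ℤ) (w : ℂ), x1 - l / 2 ≤ w.re - k * l → w.re - k * l < x1 + l →
      H w = h (w - k * lam) := by
    intro k w h1 h2
    have a1 := hn1 w
    have a2 := hn2 w
    have b1 : n w < k + 1 := by
      by_contra hcon
      push Not at hcon
      have : ((k : ℝ) + 1) ≤ n w := by exact_mod_cast hcon
      nlinarith
    have b2 : k - 2 < n w := by
      by_contra hcon
      push Not at hcon
      have : (n w : ℝ) ≤ (k : ℝ) - 2 := by exact_mod_cast hcon
      nlinarith
    have b3 : n w = k ∨ n w = k - 1 := by omega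
    rcases b3 with b | b
    · simp only [H, b]
    · simp only [H]
      rw [b] at a1 a2 ⊢
      push_cast at a1 a2 ⊢
      have : w - ((k : ℂ) - 1) * lam = (w - k * lam) + lam := by ring
      rw [this]
      apply hper <;> rw [hre] <;> linarith
  have hHd : Differentiable ℂ H := by
    intro z
    have a1 := hn1 z
    have a2 := hn2 z
    have hev : H =ᶠ[𝓝 z] fun w => h (w - n z * lam) := by
      have c : ContinuousAt (fun w : ℂ => w.re - n z * l) z := by fun_prop
      filter_upwards [c.eventually_const_lt (show x1 - l / 2 < z.re - n z * l by linarith),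
        c.eventually_lt_const a2] with w h1 h2
      exact claim (n z) w h1.le h2
    refine DifferentiableAt.congr_of_eventuallyEq ?_ hev
    have hopen : IsOpen {z : ℂ | lo < z.re ∧ z.re < hi + l} :=
      (isOpen_lt continuous_const continuous_re).inter (isOpen_lt continuous_re continuous_const)
    refine DifferentiableAt.comp (g := h) z (hd.differentiableAt (hopen.mem_nhds ?_)) (by fun_prop)
    constructor <;> rw [hre] <;> linarith
  have hmem : ∀ z : ℂ, lo ≤ (z - n z * lam).re ∧ (z - n z * lam).re ≤ hi + l := by
    intro z
    have a1 := hn1 z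
    have a2 := hn2 z
    rw [hre]; constructor <;> linarith
  have hbdd : Bornology.IsBounded (Set.range H) := by
    rw [isBounded_iff_forall_norm_le]
    refine ⟨M, ?_⟩
    rintro _ ⟨z, rfl⟩
    exact hb _ (hmem z).1 (hmem z).2
  have hconst : ∀ z, H z = H 0 := fun z => hHd.apply_eq_apply_of_bounded hbdd z 0
  have hH0 : H 0 = 0 := by
    by_contra hne
    have hpos : 0 < ‖H 0‖ := norm_pos_iff.2 hne
    have key : ∀ s : ℝ, 1 ≤ s → ‖H 0‖ * Real.sqrt s ≤ N := by
      intro s hs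
      set z : ℂ := lam * (-(s : ℂ) * I)
      have hz : (z / lam).im = -s := by
        simp only [z]; rw [mul_div_cancel_left₀ _ hl0]; simp
      have := hdec (z - n z * lam) (hmem z).1 (hmem z).2 (by rw [him, hz]; linarith)
      rw [him, hz, abs_neg, abs_of_nonneg (by linarith)] at this
      rw [← hconst z]
      exact this
    have := key ((|N| / ‖H 0‖ + 1) ^ 2) (by
      have : 0 ≤ |N| / ‖H 0‖ := by positivity
      nlinarith)
    rw [Real.sqrt_sq (by positivity), mul_add, mul_div_cancel₀ _ hpos.ne'] at this
    have := le_abs_self N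
    linarith
  have hmid : ∀ z : ℂ, x1 - l / 2 ≤ z.re → z.re < x1 + l → h z = 0 := by
    intro z h1 h2
    have := claim 0 z (by simpa using h1) (by simpa using h2)
    rw [hconst, hH0] at this
    simpa using this.symm
  -- general point: go down by integer shifts
  have hgen : ∀ k : ℕ, ∀ z : ℂ, lo ≤ z.re → z.re ≤ hi + l → z.re < lo + l + k * l → h z = 0 := by
    intro k
    induction k with
    | zero =>
      intro z h1 h2 h3
      simp at h3
      exact hmid z (by linarith) (by linarith)
    | succ k ih =>
      intro z h1 h2 h3
      by_cases hz : z.re < lo + l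
      · exact hmid z (by linarith) (by linarith)
      · push_cast at h3
        have e : (z - lam).re = z.re - l := by simp [l]
        have := hper (z - lam) (by rw [e]; linarith) (by rw [e]; linarith)
        rw [sub_add_cancel] at this
        rw [this]
        apply ih <;> rw [e] <;> linarith
  intro z h1 h2
  obtain ⟨k, hk⟩ := exists_nat_gt ((z.re - lo) / l)
  rw [div_lt_iff₀ hl] at hk
  exact hgen k z h1 h2 (by linarith)

end S13


namespace S13

open MeasureTheory Filter Topology

/-- the hypotheses on the right-hand side -/
structure Dat (lo hi δ M : ℝ) (Δ : ℂ × ℂ → ℂ) : Prop where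
  cont : ContinuousOn Δ (st lo hi δ)
  diff : DifferentiableOn ℂ Δ (ost lo hi δ)
  far : ∀ p ∈ st lo hi δ, 1 ≤ |p.2.re|
  bd : ∀ p ∈ st lo hi δ, ‖Δ p‖ * ‖p.2‖ ^ 3 ≤ M

lemma Dat.b2 {lo hi δ M : ℝ} {Δ : ℂ × ℂ → ℂ} (h : Dat lo hi δ M Δ) {p : ℂ × ℂ}
    (hp : p ∈ st lo hi δ) : ‖p.2‖ * ‖Δ p‖ ≤ M * (1 + p.2.im ^ 2)⁻¹ := by
  have h1 := h.far p hp
  have h2 := h.bd p hp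
  have h3 : 1 + p.2.im ^ 2 ≤ ‖p.2‖ ^ 2 := by
    rw [← Complex.normSq_eq_norm_sq, Complex.normSq_apply]
    nlinarith [abs_mul_abs_self p.2.re]
  rw [← div_eq_mul_inv, le_div_iff₀ (by positivity)]
  calc ‖p.2‖ * ‖Δ p‖ * (1 + p.2.im ^ 2) ≤ ‖p.2‖ * ‖Δ p‖ * ‖p.2‖ ^ 2 := by gcongr
    _ = ‖Δ p‖ * ‖p.2‖ ^ 3 := by ring
    _ ≤ M := h2

lemma Dat.b1 {lo hi δ M : ℝ} {Δ : ℂ × ℂ → ℂ} (h : Dat lo hi δ M Δ) {p : ℂ × ℂ}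
    (hp : p ∈ st lo hi δ) : ‖Δ p‖ ≤ M * (1 + p.2.im ^ 2)⁻¹ := by
  refine le_trans ?_ (h.b2 hp)
  have h1 := h.far p hp
  have := abs_re_le_norm p.2
  nlinarith [norm_nonneg (Δ p)]

/-- points of the integration line -/
noncomputable def ln (x0 : ℝ) (c : ℂ) (y : ℝ) : ℂ := ((Real.log ‖c‖ + x0 : ℝ) : ℂ) + y * I

lemma ln_re (x0 : ℝ) (c : ℂ) (y : ℝ) : (ln x0 c y).re = Real.log ‖c‖ + x0 := by
  simp [ln]

lemma ln_im (x0 : ℝ) (c : ℂ) (y : ℝ) : (ln x0 c y).im = y := by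
  simp [ln]

lemma ln_mem {lo hi δ x0 : ℝ} (h1 : lo ≤ x0) (h2 : x0 ≤ hi) {c : ℂ} (hc : 0 < ‖c‖) (hc' : ‖c‖ ≤ δ)
    (y : ℝ) : (c, ln x0 c y) ∈ st lo hi δ := by
  rw [mem_st]
  refine ⟨hc, hc', ?_, ?_⟩ <;> simp only [XX, ln_re] <;> linarith

/-- the Cauchy type integral -/
noncomputable def Phi (lam : ℂ) (Δ : ℂ × ℂ → ℂ) (x0 : ℝ) (p : ℂ × ℂ) : ℂ :=
  (I / lam) * ∫ y : ℝ, Δ (p.1, ln x0 p.1 y) * kern lam (p.2 - ln x0 p.1 y)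

section
variable {lam : ℂ} {lo hi δ M : ℝ} {Δ : ℂ × ℂ → ℂ}

lemma integrand_cont (h : Dat lo hi δ M Δ) {x0 : ℝ} (h1 : lo ≤ x0) (h2 : x0 ≤ hi)
    {c : ℂ} (hc : 0 < ‖c‖) (hc' : ‖c‖ ≤ δ) (ζ : ℂ)
    (hz1 : 0 < XX (c, ζ) - x0) (hz2 : XX (c, ζ) - x0 < lam.re) :
    Continuous (fun y : ℝ => Δ (c, ln x0 c y) * kern lam (ζ - ln x0 c y)) := by
  have hln : Continuous (fun y => ln x0 c y) := by unfold ln; fun_prop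
  refine Continuous.mul ?_ ?_
  · exact h.cont.comp_continuous (by fun_prop) (fun y => ln_mem h1 h2 hc hc' y)
  · rw [continuous_iff_continuousAt]
    intro y
    have : ContinuousAt (kern lam) (ζ - ln x0 c y) := by
      refine (kern_diff' lam _ ?_ ?_).continuousAt <;>
        simp only [sub_re, ln_re] <;> simp only [XX] at hz1 hz2 <;> linarith
    exact ContinuousAt.comp (f := fun y : ℝ => ζ - ln x0 c y) this (by fun_prop)

lemma integrand_bd {ε C : ℝ} (hC : ∀ z : ℂ, ε ≤ z.re → z.re ≤ lam.re - ε →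
      ‖kern lam z‖ ≤ C ∧ -(z / lam).im * ‖kern lam z‖ ≤ C)
    (h : Dat lo hi δ M Δ) {x0 : ℝ} (h1 : lo ≤ x0) (h2 : x0 ≤ hi)
    {c : ℂ} (hc : 0 < ‖c‖) (hc' : ‖c‖ ≤ δ) (ζ : ℂ)
    (hz1 : ε ≤ XX (c, ζ) - x0) (hz2 : XX (c, ζ) - x0 ≤ lam.re - ε) (y : ℝ) :
    ‖Δ (c, ln x0 c y) * kern lam (ζ - ln x0 c y)‖ ≤ (M * C) * (1 + y ^ 2)⁻¹ ∧
    -(ζ / lam).im * ‖Δ (c, ln x0 c y) * kern lam (ζ - ln x0 c y)‖ ≤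
      (M * C * (1 + ‖lam‖⁻¹)) * (1 + y ^ 2)⁻¹ := by
  have hmem := ln_mem h1 h2 hc hc' y
  have e1 := h.b1 hmem
  have e2 := h.b2 hmem
  simp only [ln_im] at e1 e2
  obtain ⟨k1, k2⟩ := hC (ζ - ln x0 c y)
    (by simp only [sub_re, ln_re]; simp only [XX] at hz1; linarith)
    (by simp only [sub_re, ln_re]; simp only [XX] at hz2; linarith)
  set D := ‖Δ (c, ln x0 c y)‖ with hD
  set K := ‖kern lam (ζ - ln x0 c y)‖ with hK
  have hD0 : 0 ≤ D := norm_nonneg _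
  have hK0 : 0 ≤ K := norm_nonneg _
  rw [norm_mul, ← hD, ← hK]
  have hC0 : 0 ≤ C := hK0.trans k1
  have hy : 0 < (1 + y ^ 2)⁻¹ := by positivity
  constructor
  · calc D * K ≤ (M * (1 + y ^ 2)⁻¹) * C := by gcongr; exact hD0.trans e1
      _ = _ := by ring
  · have hsplit : -(ζ / lam).im ≤ ‖ln x0 c y‖ * ‖lam‖⁻¹ + -((ζ - ln x0 c y) / lam).im := by
      have : (ζ / lam).im = (ln x0 c y / lam).im + ((ζ - ln x0 c y) / lam).im := by
        rw [← add_im]; congr 1; ring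
      rw [this]
      have h3 := abs_im_le_norm (ln x0 c y / lam)
      rw [norm_div, div_eq_mul_inv ‖_‖] at h3
      linarith [neg_abs_le (ln x0 c y / lam).im]
    calc -(ζ / lam).im * (D * K) ≤
        (‖ln x0 c y‖ * ‖lam‖⁻¹ + -((ζ - ln x0 c y) / lam).im) * (D * K) := by gcongr
      _ = (‖ln x0 c y‖ * D) * ‖lam‖⁻¹ * K + D * (-((ζ - ln x0 c y) / lam).im * K) := by ring
      _ ≤ (M * (1 + y ^ 2)⁻¹) * ‖lam‖⁻¹ * C + (M * (1 + y ^ 2)⁻¹) * C := by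
          have : 0 ≤ M * (1 + y ^ 2)⁻¹ := hD0.trans e1
          have t1 : D * (-((ζ - ln x0 c y) / lam).im * K) ≤ (M * (1 + y ^ 2)⁻¹) * C :=
            (mul_le_mul_of_nonneg_left k2 hD0).trans (by gcongr)
          have t2 : (‖ln x0 c y‖ * D) * ‖lam‖⁻¹ * K ≤ (M * (1 + y ^ 2)⁻¹) * ‖lam‖⁻¹ * C := by
            gcongr
          linarith
      _ = _ := by ring

lemma Phi_bound {ε C : ℝ} (hC : ∀ z : ℂ, ε ≤ z.re → z.re ≤ lam.re - ε →
      ‖kern lam z‖ ≤ C ∧ -(z / lam).im * ‖kern lam z‖ ≤ C)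
    (h : Dat lo hi δ M Δ) {x0 : ℝ} (h1 : lo ≤ x0) (h2 : x0 ≤ hi)
    {p : ℂ × ℂ} (hc : 0 < ‖p.1‖) (hc' : ‖p.1‖ ≤ δ)
    (hz1 : ε ≤ XX p - x0) (hz2 : XX p - x0 ≤ lam.re - ε) (hε : 0 < ε) :
    ‖Phi lam Δ x0 p‖ ≤ M * C * Real.pi * ‖lam‖⁻¹ ∧
    -(p.2 / lam).im * ‖Phi lam Δ x0 p‖ ≤ M * C * (1 + ‖lam‖⁻¹) * Real.pi * ‖lam‖⁻¹ := by
  obtain ⟨c, ζ⟩ := p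
  simp only at hc hc'
  have hb := integrand_bd hC h h1 h2 hc hc' ζ hz1 hz2
  have hIntg : Integrable (fun y : ℝ => Δ (c, ln x0 c y) * kern lam (ζ - ln x0 c y)) := by
    refine ((integrable_inv_one_add_sq).const_mul (M * C)).mono'
      (integrand_cont h h1 h2 hc hc' ζ (by linarith) (by linarith)).aestronglyMeasurable
      (ae_of_all _ fun y => (hb y).1)
  have hn : ‖Phi lam Δ x0 (c, ζ)‖ ≤
      (∫ y : ℝ, ‖Δ (c, ln x0 c y) * kern lam (ζ - ln x0 c y)‖) * ‖lam‖⁻¹ := by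
    unfold Phi
    rw [norm_mul, norm_div, norm_I, one_div, mul_comm]
    gcongr
    exact norm_integral_le_integral_norm _
  constructor
  · refine hn.trans ?_
    gcongr
    calc _ ≤ ∫ y : ℝ, (M * C) * (1 + y ^ 2)⁻¹ :=
          integral_mono hIntg.norm ((integrable_inv_one_add_sq).const_mul _) (fun y => (hb y).1)
      _ = _ := by rw [integral_const_mul, integral_univ_inv_one_add_sq]
  · rcases le_or_gt (-(ζ / lam).im) 0 with h0 | h0
    · refine (mul_nonpos_of_nonpos_of_nonneg h0 (norm_nonneg _)).trans ?_
      have t := (norm_nonneg _).trans (hb 0).1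
      simp only [ne_eq, OfNat.ofNat_ne_zero, not_false_eq_true, zero_pow, add_zero, inv_one,
        mul_one] at t
      positivity
    · calc -(ζ / lam).im * ‖Phi lam Δ x0 (c, ζ)‖ ≤ -(ζ / lam).im *
          ((∫ y : ℝ, ‖Δ (c, ln x0 c y) * kern lam (ζ - ln x0 c y)‖) * ‖lam‖⁻¹) := by gcongr
        _ = (∫ y : ℝ, -(ζ / lam).im * ‖Δ (c, ln x0 c y) * kern lam (ζ - ln x0 c y)‖) * ‖lam‖⁻¹ := by
            rw [integral_const_mul]; ring
        _ ≤ (∫ y : ℝ, (M * C * (1 + ‖lam‖⁻¹)) * (1 + y ^ 2)⁻¹) * ‖lam‖⁻¹ := by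
            gcongr ?_ * _
            exact integral_mono (hIntg.norm.const_mul _) ((integrable_inv_one_add_sq).const_mul _)
              (fun y => (hb y).2)
        _ = _ := by rw [integral_const_mul, integral_univ_inv_one_add_sq]

lemma Phi_cont (hl : 0 < lam.re) {ε : ℝ} (hε : 0 < ε) (h : Dat lo hi δ M Δ) {x0 : ℝ}
    (h1 : lo ≤ x0) (h2 : x0 ≤ hi) :
    ContinuousOn (Phi lam Δ x0) (st (x0 + ε) (x0 + lam.re - ε) δ) := by
  obtain ⟨C, -, hC⟩ := kern_bound lam ε hε hl
  unfold Phi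
  refine continuousOn_const.mul ?_
  have hln : ∀ y, ∀ p ∈ st (x0 + ε) (x0 + lam.re - ε) δ,
      ContinuousAt (fun p : ℂ × ℂ => ln x0 p.1 y) p := by
    intro y p hp
    unfold ln
    refine ContinuousAt.add ?_ continuousAt_const
    refine Complex.continuous_ofReal.continuousAt.comp ?_
    exact ContinuousAt.add (ContinuousAt.log (by fun_prop) (mem_st.1 hp).1.ne') continuousAt_const
  refine continuousOn_of_dominated (bound := fun y => (M * C) * (1 + y ^ 2)⁻¹) ?_ ?_
    ((integrable_inv_one_add_sq).const_mul _) ?_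
  · intro p hp
    obtain ⟨a1, a2, a3, a4⟩ := mem_st.1 hp
    exact (integrand_cont h h1 h2 a1 a2 p.2 (by simp only [Prod.mk.eta]; linarith)
      (by simp only [Prod.mk.eta]; linarith)).aestronglyMeasurable
  · intro p hp
    obtain ⟨a1, a2, a3, a4⟩ := mem_st.1 hp
    exact ae_of_all _ fun y => (integrand_bd hC h h1 h2 a1 a2 p.2
      (by simp only [Prod.mk.eta]; linarith) (by simp only [Prod.mk.eta]; linarith) y).1
  · refine ae_of_all _ fun y => ContinuousOn.mul ?_ ?_
    · refine h.cont.comp (f := fun p : ℂ × ℂ => (p.1, ln x0 p.1 y)) ?_ ?_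
      · intro p hp
        exact (ContinuousAt.prodMk continuousAt_fst (hln y p hp)).continuousWithinAt
      · intro p hp
        obtain ⟨a1, a2, a3, a4⟩ := mem_st.1 hp
        exact ln_mem h1 h2 a1 a2 y
    · intro p hp
      obtain ⟨a1, a2, a3, a4⟩ := mem_st.1 hp
      refine ContinuousAt.continuousWithinAt ?_
      have : ContinuousAt (kern lam) (p.2 - ln x0 p.1 y) := by
        refine (kern_diff' lam _ ?_ ?_).continuousAt <;>
          simp only [sub_re, ln_re] <;> simp only [XX] at a3 a4 <;> linarith
      exact ContinuousAt.comp (f := fun p : ℂ × ℂ => p.2 - ln x0 p.1 y) this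
        (continuousAt_snd.sub (hln y p hp))

lemma Phi_indep (hl : 0 < lam.re) (h : Dat lo hi δ M Δ) {x0 x1 : ℝ}
    (h1 : lo < x0) (h2 : x0 < hi) (h1' : lo < x1) (h2' : x1 < hi)
    {p : ℂ × ℂ} (hc : 0 < ‖p.1‖) (hc' : ‖p.1‖ ≤ δ)
    (hz1 : 0 < XX p - x0) (hz2 : XX p - x0 < lam.re)
    (hz1' : 0 < XX p - x1) (hz2' : XX p - x1 < lam.re) :
    Phi lam Δ x0 p = Phi lam Δ x1 p := by
  wlog hle : x0 ≤ x1 generalizing x0 x1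
  · exact (this h1' h2' h1 h2 hz1' hz2' hz1 hz2 (le_of_not_ge hle)).symm
  unfold Phi
  congr 1
  simp only [XX] at *
  refine contour_indep lam hl (fun η => Δ (p.1, η)) (Real.log ‖p.1‖ + lo) (Real.log ‖p.1‖ + hi) M
    (Real.log ‖p.1‖ + x0) (Real.log ‖p.1‖ + x1) p.2 (by linarith) (by linarith) (by linarith)
    (slice_hol Δ lo hi δ h.cont h.diff p.1 hc hc') ?_ (by linarith) (by linarith)
  intro z z1 z2
  exact h.b1 (p := (p.1, z)) ⟨hc, hc', z1.le, z2.le⟩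

lemma Phi_jump (hl : 0 < lam.re) (h : Dat lo hi δ M Δ) {x0 x1 : ℝ}
    (h1 : lo < x0) (h2' : x1 < hi)
    {p : ℂ × ℂ} (hc : 0 < ‖p.1‖) (hc' : ‖p.1‖ ≤ δ)
    (hz1 : 0 < XX p - x0) (hz2 : XX p - x0 < lam.re)
    (hz1' : 0 < x1 - XX p) (hz2' : x1 - XX p < lam.re) :
    Phi lam Δ x1 (p.1, p.2 + lam) - Phi lam Δ x0 p = Δ p := by
  have hl0 : lam ≠ 0 := by rintro rfl; simp at hl
  unfold Phi
  simp only [XX] at *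
  have e : ∀ y : ℝ, kern lam (p.2 + lam - ln x1 p.1 y) = kern lam (p.2 - ln x1 p.1 y) := by
    intro y
    rw [← kern_periodic lam (p.2 - _) hl0]
    congr 1; ring
  simp only [e]
  refine contour_jump lam hl (fun η => Δ (p.1, η)) (Real.log ‖p.1‖ + lo) (Real.log ‖p.1‖ + hi) M
    (Real.log ‖p.1‖ + x0) (Real.log ‖p.1‖ + x1) p.2 (by linarith) (by linarith)
    (slice_hol Δ lo hi δ h.cont h.diff p.1 hc hc') ?_ (by linarith) (by linarith) (by linarith)
    (by linarith)
  intro z z1 z2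
  exact h.b1 (p := (p.1, z)) ⟨hc, hc', z1.le, z2.le⟩

lemma shift_bd (y s : ℝ) (hs : |s| ≤ Real.pi) :
    (1 + (y + s) ^ 2)⁻¹ ≤ (2 + 2 * Real.pi ^ 2) * (1 + y ^ 2)⁻¹ := by
  have h1 : s ^ 2 ≤ Real.pi ^ 2 := by
    rw [← sq_abs s]; gcongr
  rw [← div_eq_mul_inv, inv_eq_one_div, div_le_div_iff₀ (by positivity) (by positivity)]
  nlinarith [sq_nonneg (y + 2 * s), sq_nonneg (y + s), mul_nonneg (sq_nonneg Real.pi) (sq_nonneg (y + s))]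

lemma Phi_diff (hl : 0 < lam.re) {ε : ℝ} (hε : 0 < ε) (h : Dat lo hi δ M Δ) {x0 : ℝ}
    (h1 : lo < x0) (h2 : x0 < hi) :
    DifferentiableOn ℂ (Phi lam Δ x0) (ost (x0 + ε) (x0 + lam.re - ε) δ) := by
  obtain ⟨C, hC0, hC⟩ := kern_bound lam ε hε hl
  intro p0 hp0
  refine DifferentiableAt.differentiableWithinAt ?_
  set c0 := p0.1 with hc0
  have hc0n : 0 < ‖c0‖ := (mem_ost.1 hp0).1
  have hc0' : c0 ≠ 0 := norm_pos_iff.1 hc0n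
  have hM : 0 ≤ M := by
    have := h.b1 (ln_mem h1.le h2.le hc0n (mem_ost.1 hp0).2.1.le 0)
    have := (norm_nonneg _).trans this
    simpa [ln_im] using this
  set U : Set (ℂ × ℂ) := ost (x0 + ε) (x0 + lam.re - ε) δ ∩ {p | p.1 / c0 ∈ slitPlane} with hUd
  have hU : IsOpen U := (ost_open _ _ _).inter
    (isOpen_slitPlane.preimage (by fun_prop : Continuous (fun p : ℂ × ℂ => p.1 / c0)))
  have hp0U : p0 ∈ U := ⟨hp0, by
    change p0.1 / c0 ∈ slitPlane
    rw [← hc0, div_self hc0']; exact one_mem_slitPlane⟩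
  let et : ℂ × ℂ → ℝ → ℂ := fun p y => ((Real.log ‖c0‖ + x0 : ℝ) : ℂ) + Complex.log (p.1 / c0) + y * I
  have het : ∀ p ∈ U, ∀ y, et p y = ln x0 p.1 (y + (Complex.log (p.1 / c0)).im) := by
    intro p hp y
    have hpn := (mem_ost.1 hp.1).1
    apply Complex.ext
    · rw [ln_re]
      simp [et, Complex.log_re, Real.log_div hpn.ne' hc0n.ne']
      ring
    · rw [ln_im]
      simp [et]; ring
  have key := param_hol (fun p y => Δ (p.1, et p y) * kern lam (p.2 - et p y)) U hU
    (fun y => (M * C) * ((2 + 2 * Real.pi ^ 2) * (1 + y ^ 2)⁻¹))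
    (((integrable_inv_one_add_sq).const_mul _).const_mul _) ?_ ?_ ?_
  · have e : ∀ᶠ p in 𝓝 p0, Phi lam Δ x0 p =
        (I / lam) * ∫ y : ℝ, Δ (p.1, et p y) * kern lam (p.2 - et p y) := by
      filter_upwards [hU.mem_nhds hp0U] with p hp
      unfold Phi
      congr 1
      simp only [het p hp]
      exact (integral_add_right_eq_self
        (fun y => Δ (p.1, ln x0 p.1 y) * kern lam (p.2 - ln x0 p.1 y)) _).symm
    exact ((key.differentiableAt (hU.mem_nhds hp0U)).const_mul _).congr_of_eventuallyEq e
  · intro p hp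
    simp only [het p hp]
    obtain ⟨a1, a2, a3, a4⟩ := mem_ost.1 hp.1
    exact (integrand_cont h h1.le h2.le a1 a2.le p.2 (by simp only [Prod.mk.eta]; linarith)
      (by simp only [Prod.mk.eta]; linarith)).comp (continuous_id.add continuous_const)
  · intro y p hp
    obtain ⟨a1, a2, a3, a4⟩ := mem_ost.1 hp.1
    have hetd : DifferentiableAt ℂ (fun p => et p y) p := by
      have : DifferentiableAt ℂ (fun p : ℂ × ℂ => Complex.log (p.1 / c0)) p :=
        DifferentiableAt.clog (by fun_prop) hp.2
      simp only [et]
      fun_prop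
    refine DifferentiableAt.differentiableWithinAt (DifferentiableAt.mul ?_ ?_)
    · have hmem : (p.1, et p y) ∈ ost lo hi δ := by
        rw [het p hp, mem_ost]
        refine ⟨a1, a2, ?_, ?_⟩ <;> simp only [XX, ln_re] <;> linarith
      exact DifferentiableAt.comp (g := Δ) (f := fun p : ℂ × ℂ => (p.1, et p y)) p
        (h.diff.differentiableAt (ost_nhds hmem)) (differentiableAt_fst.prodMk hetd)
    · have : DifferentiableAt ℂ (kern lam) (p.2 - et p y) := by
        rw [het p hp]
        refine kern_diff' lam _ ?_ ?_ <;>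
          simp only [sub_re, ln_re] <;> simp only [XX] at a3 a4 <;> linarith
      exact DifferentiableAt.comp (g := kern lam) (f := fun p : ℂ × ℂ => p.2 - et p y) p this
        (differentiableAt_snd.sub hetd)
  · intro p hp y
    obtain ⟨a1, a2, a3, a4⟩ := mem_ost.1 hp.1
    simp only [het p hp]
    refine (integrand_bd hC h h1.le h2.le a1 a2.le p.2 (by simp only [Prod.mk.eta]; linarith)
      (by simp only [Prod.mk.eta]; linarith) _).1.trans ?_
    gcongr
    exact shift_bd _ _ (by rw [Complex.log_im]; exact abs_arg_le_pi _)

end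

end S13


namespace S13

open MeasureTheory Filter Topology

lemma glue_cont {φ g : ℂ × ℂ → ℂ} {l h L H δ : ℝ} (hg : ContinuousOn g (st l h δ))
    (he : ∀ p ∈ st l h δ, φ p = g p) {p0 : ℂ × ℂ} (hp0 : p0 ∈ st L H δ)
    (h1 : l < XX p0 ∨ (l ≤ L)) (h2 : XX p0 < h ∨ (H ≤ h)) :
    ContinuousWithinAt φ (st L H δ) p0 := by
  obtain ⟨a1, a2, a3, a4⟩ := mem_st.1 hp0
  have hX := (XX_cont p0 a1).continuousWithinAt (s := st L H δ)
  have e1 : ∀ᶠ p in 𝓝[st L H δ] p0, l ≤ XX p := by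
    rcases h1 with h1 | h1
    · filter_upwards [hX.eventually_const_lt h1] with p hp using hp.le
    · filter_upwards [self_mem_nhdsWithin] with p hp using h1.trans (mem_st.1 hp).2.2.1
  have e2 : ∀ᶠ p in 𝓝[st L H δ] p0, XX p ≤ h := by
    rcases h2 with h1 | h1
    · filter_upwards [hX.eventually_lt_const h1] with p hp using hp.le
    · filter_upwards [self_mem_nhdsWithin] with p hp using (mem_st.1 hp).2.2.2.trans h1
  have e3 : ∀ᶠ p in 𝓝[st L H δ] p0, p ∈ st l h δ := by
    filter_upwards [e1, e2, self_mem_nhdsWithin] with p q1 q2 q3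
    exact mem_st.2 ⟨(mem_st.1 q3).1, (mem_st.1 q3).2.1, q1, q2⟩
  have hp0' : p0 ∈ st l h δ := e3.self_of_nhdsWithin hp0
  have := (hg p0 hp0').mono_of_mem_nhdsWithin e3
  refine this.congr_of_eventuallyEq ?_ (he p0 hp0')
  filter_upwards [e3] with p hp using he p hp

lemma glue_diff {φ g : ℂ × ℂ → ℂ} {l h δ : ℝ} (hg : DifferentiableOn ℂ g (ost l h δ))
    (he : ∀ p ∈ st l h δ, φ p = g p) {p0 : ℂ × ℂ} (hp0 : p0 ∈ ost l h δ) :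
    DifferentiableAt ℂ φ p0 := by
  refine (hg.differentiableAt (ost_nhds hp0)).congr_of_eventuallyEq ?_
  filter_upwards [ost_nhds hp0] with p hp using he p (ost_sub_st _ _ _ hp)

lemma XX_add (p : ℂ × ℂ) (w : ℂ) : XX (p.1, p.2 + w) = XX p + w.re := by
  simp [XX]; ring

lemma XX_sub (p : ℂ × ℂ) (w : ℂ) : XX (p.1, p.2 - w) = XX p - w.re := by
  simp [XX]; ring

/-- choice of the integration line -/
noncomputable def ell (lo hi ε x : ℝ) : ℝ := max (lo + ε) (min (x - 5 * ε) (hi - ε))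

lemma ell_prop {lo hi ε x : ℝ} (hε : 0 < ε) (hw : 10 * ε < hi - lo) (h1 : lo + 2 * ε ≤ x)
    (h2 : x ≤ hi + 8 * ε) : lo + ε ≤ ell lo hi ε x ∧ ell lo hi ε x ≤ hi - ε ∧
      ε ≤ x - ell lo hi ε x ∧ x - ell lo hi ε x ≤ 9 * ε := by
  unfold ell
  rcases max_cases (lo + ε) (min (x - 5 * ε) (hi - ε)) with ⟨e, e'⟩ | ⟨e, e'⟩ <;> rw [e] <;>
  rcases min_cases (x - 5 * ε) (hi - ε) with ⟨f, f'⟩ | ⟨f, f'⟩ <;> rw [f] at e' <;> (try rw [f]) <;>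
  refine ⟨?_, ?_, ?_, ?_⟩ <;> linarith

/-- the middle solution -/
noncomputable def mid (lam : ℂ) (Δ : ℂ × ℂ → ℂ) (lo hi ε : ℝ) (p : ℂ × ℂ) : ℂ :=
  Phi lam Δ (ell lo hi ε (XX p)) p

section
variable {lam : ℂ} {lo hi δ M ε : ℝ} {Δ : ℂ × ℂ → ℂ}

lemma mid_eq (hε : 0 < ε) (hlε : lam.re = 10 * ε) (hw : 10 * ε < hi - lo) (h : Dat lo hi δ M Δ)
    {p : ℂ × ℂ} (hp : p ∈ st (lo + 2 * ε) (hi + 8 * ε) δ) {x0 : ℝ} (h1 : lo < x0) (h2 : x0 < hi)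
    (h3 : 0 < XX p - x0) (h4 : XX p - x0 < 10 * ε) : mid lam Δ lo hi ε p = Phi lam Δ x0 p := by
  obtain ⟨a1, a2, a3, a4⟩ := mem_st.1 hp
  obtain ⟨b1, b2, b3, b4⟩ := ell_prop hε hw a3 a4
  exact Phi_indep (by linarith) h (by linarith) (by linarith) h1 h2 a1 a2 (by linarith)
    (by linarith) (by linarith) (by linarith)

lemma mid_cont (hε : 0 < ε) (hlε : lam.re = 10 * ε) (hw : 10 * ε < hi - lo)
    (h : Dat lo hi δ M Δ) :
    ContinuousOn (mid lam Δ lo hi ε) (st (lo + 2 * ε) (hi + 8 * ε) δ) := by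
  intro p0 hp0
  obtain ⟨a1, a2, a3, a4⟩ := mem_st.1 hp0
  obtain ⟨b1, b2, b3, b4⟩ := ell_prop hε hw a3 a4
  set x0 := ell lo hi ε (XX p0)
  have hc := Phi_cont (lam := lam) (by linarith) (half_pos hε) h (x0 := x0) (by linarith)
    (by linarith)
  have hc2 : ContinuousOn (Phi lam Δ x0)
      (st (max (lo + 2 * ε) (x0 + ε / 2)) (min (hi + 8 * ε) (x0 + lam.re - ε / 2)) δ) := by
    refine hc.mono fun p hp => ?_
    obtain ⟨c1, c2, c3, c4⟩ := mem_st.1 hp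
    exact mem_st.2 ⟨c1, c2, (le_max_right _ _).trans c3, c4.trans (min_le_right _ _)⟩
  refine glue_cont hc2 ?_ hp0 ?_ ?_
  · intro p hp
    obtain ⟨c1, c2, c3, c4⟩ := mem_st.1 hp
    have d1 := (le_max_left _ _).trans c3
    have d2 := (le_max_right _ _).trans c3
    have d3 := c4.trans (min_le_left _ _)
    have d4 := c4.trans (min_le_right _ _)
    exact mid_eq hε hlε hw h (mem_st.2 ⟨c1, c2, d1, d3⟩) (by linarith) (by linarith) (by linarith)
      (by linarith)
  · rcases max_cases (lo + 2 * ε) (x0 + ε / 2) with ⟨e, e'⟩ | ⟨e, e'⟩ <;> rw [e]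
    · right; exact le_rfl
    · left; linarith
  · rcases min_cases (hi + 8 * ε) (x0 + lam.re - ε / 2) with ⟨e, e'⟩ | ⟨e, e'⟩ <;> rw [e]
    · right; exact le_rfl
    · left; linarith

lemma mid_diff (hε : 0 < ε) (hlε : lam.re = 10 * ε) (hw : 10 * ε < hi - lo)
    (h : Dat lo hi δ M Δ) :
    DifferentiableOn ℂ (mid lam Δ lo hi ε) (ost (lo + 2 * ε) (hi + 8 * ε) δ) := by
  intro p0 hp0
  refine DifferentiableAt.differentiableWithinAt ?_
  obtain ⟨a1, a2, a3, a4⟩ := mem_ost.1 hp0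
  obtain ⟨b1, b2, b3, b4⟩ := ell_prop hε hw a3.le a4.le
  set x0 := ell lo hi ε (XX p0)
  have hc := Phi_diff (lam := lam) (by linarith) (half_pos hε) h (x0 := x0) (by linarith)
    (by linarith)
  have hm : p0 ∈ ost (x0 + ε / 2) (x0 + lam.re - ε / 2) δ :=
    mem_ost.2 ⟨a1, a2, by linarith, by linarith⟩
  refine (hc.differentiableAt (ost_nhds hm)).congr_of_eventuallyEq ?_
  filter_upwards [ost_nhds hp0, ost_nhds hm] with p hp hp'
  obtain ⟨c1, c2, c3, c4⟩ := mem_ost.1 hp'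
  exact mid_eq hε hlε hw h (ost_sub_st _ _ _ hp) (by linarith) (by linarith) (by linarith)
      (by linarith)

lemma mid_jump (hε : 0 < ε) (hlε : lam.re = 10 * ε) (hw : 10 * ε < hi - lo)
    (h : Dat lo hi δ M Δ) {p : ℂ × ℂ} (hp : p ∈ st (lo + 2 * ε) (hi - 2 * ε) δ) :
    mid lam Δ lo hi ε (p.1, p.2 + lam) - mid lam Δ lo hi ε p = Δ p := by
  obtain ⟨a1, a2, a3, a4⟩ := mem_st.1 hp
  obtain ⟨x0, e1, e2, e3⟩ : ∃ x0, lo + ε ≤ x0 ∧ ε ≤ XX p - x0 ∧ XX p - x0 ≤ 5 * ε := by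
    refine ⟨max (lo + ε) (XX p - 5 * ε), le_max_left _ _, ?_, ?_⟩
    · have : max (lo + ε) (XX p - 5 * ε) ≤ XX p - ε := max_le (by linarith) (by linarith)
      linarith
    · linarith [le_max_right (lo + ε) (XX p - 5 * ε)]
  obtain ⟨x1, f1, f2, f3⟩ : ∃ x1, x1 ≤ hi - ε ∧ ε ≤ x1 - XX p ∧ x1 - XX p ≤ 5 * ε := by
    refine ⟨min (hi - ε) (XX p + 5 * ε), min_le_left _ _, ?_, ?_⟩
    · have : XX p + ε ≤ min (hi - ε) (XX p + 5 * ε) := le_min (by linarith) (by linarith)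
      linarith
    · linarith [min_le_right (hi - ε) (XX p + 5 * ε)]
  have hX := XX_add p lam
  rw [mid_eq hε hlε hw h (mem_st.2 ⟨a1, a2, a3, by linarith⟩) (x0 := x0) (by linarith) (by linarith)
    (by linarith) (by linarith),
    mid_eq (p := (p.1, p.2 + lam)) hε hlε hw h (mem_st.2 ⟨a1, a2, by rw [hX]; linarith, by rw [hX]; linarith⟩) (x0 := x1)
    (by linarith) (by linarith) (by rw [hX]; linarith) (by rw [hX]; linarith)]
  exact Phi_jump (by linarith) h (by linarith) (by linarith) a1 a2 (by linarith) (by linarith)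
    (by linarith) (by linarith)

lemma mid_bound (hε : 0 < ε) (hlε : lam.re = 10 * ε) (hw : 10 * ε < hi - lo)
    {C : ℝ} (hC : ∀ z : ℂ, ε ≤ z.re → z.re ≤ lam.re - ε →
      ‖kern lam z‖ ≤ C ∧ -(z / lam).im * ‖kern lam z‖ ≤ C)
    (h : Dat lo hi δ M Δ) {p : ℂ × ℂ} (hp : p ∈ st (lo + 2 * ε) (hi + 8 * ε) δ) :
    ‖mid lam Δ lo hi ε p‖ ≤ M * C * Real.pi * ‖lam‖⁻¹ ∧
    -(p.2 / lam).im * ‖mid lam Δ lo hi ε p‖ ≤ M * C * (1 + ‖lam‖⁻¹) * Real.pi * ‖lam‖⁻¹ := by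
  obtain ⟨a1, a2, a3, a4⟩ := mem_st.1 hp
  obtain ⟨b1, b2, b3, b4⟩ := ell_prop hε hw a3 a4
  exact Phi_bound hC h (by linarith) (by linarith) a1 a2 b3 (by linarith) hε

lemma Dat.b3 (h : Dat lo hi δ M Δ) {p : ℂ × ℂ} (hp : p ∈ st lo hi δ) :
    ‖Δ p‖ ≤ M ∧ |(p.2 / lam).im| * ‖Δ p‖ ≤ M * ‖lam‖⁻¹ := by
  have e1 := h.b1 hp
  have e2 := h.b2 hp
  have hM : 0 ≤ M := le_trans (by positivity) (h.bd p hp)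
  have h1 : (1 + p.2.im ^ 2)⁻¹ ≤ 1 := inv_le_one_of_one_le₀ (by nlinarith [sq_nonneg p.2.im])
  have h2 : M * (1 + p.2.im ^ 2)⁻¹ ≤ M := by nlinarith
  refine ⟨e1.trans h2, ?_⟩
  have h3 := abs_im_le_norm (p.2 / lam)
  rw [norm_div] at h3
  calc |(p.2 / lam).im| * ‖Δ p‖ ≤ (‖p.2‖ / ‖lam‖) * ‖Δ p‖ := by gcongr
    _ = (‖p.2‖ * ‖Δ p‖) * ‖lam‖⁻¹ := by ring
    _ ≤ M * ‖lam‖⁻¹ := by gcongr; exact e2.trans h2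

end

lemma exists_sol (lam : ℂ) (hl : 0 < lam.re) (lo hi : ℝ) (hw : lam.re < hi - lo) :
    ∃ K : ℝ, 0 < K ∧ ∀ (δ M : ℝ) (Δ : ℂ × ℂ → ℂ), 0 ≤ M → Dat lo hi δ M Δ → ∃ φ : ℂ × ℂ → ℂ,
      ContinuousOn φ (st lo (hi + lam.re) δ) ∧ DifferentiableOn ℂ φ (ost lo (hi + lam.re) δ) ∧
      (∀ p ∈ st lo hi δ, φ (p.1, p.2 + lam) - φ p = Δ p) ∧
      ∀ p ∈ st lo (hi + lam.re) δ, ‖φ p‖ ≤ K * M ∧ -(p.2 / lam).im * ‖φ p‖ ≤ K * M := by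
  obtain ⟨ε, hε, hlε⟩ : ∃ ε, 0 < ε ∧ lam.re = 10 * ε := ⟨lam.re / 10, by positivity, by ring⟩
  have hl0 : lam ≠ 0 := by rintro rfl; simp at hl
  obtain ⟨C, hC0, hC⟩ := kern_bound lam ε hε hl
  have hln : 0 < ‖lam‖⁻¹ := by positivity
  have hpi := Real.pi_pos
  set A := C * Real.pi * ‖lam‖⁻¹ with hA
  set B := C * (1 + ‖lam‖⁻¹) * Real.pi * ‖lam‖⁻¹ with hB
  have hA0 : 0 < A := by positivity
  have hB0 : 0 < B := by positivity
  refine ⟨A + 1 + B + ‖lam‖⁻¹, by positivity, ?_⟩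
  intro δ M Δ hM h
  have hw' : 10 * ε < hi - lo := by linarith
  rw [hlε]
  set md := mid lam Δ lo hi ε with hmd
  have hmc : ContinuousOn md (st (lo + 2 * ε) (hi + 8 * ε) δ) := mid_cont hε hlε hw' h
  have hmdf : DifferentiableOn ℂ md (ost (lo + 2 * ε) (hi + 8 * ε) δ) := mid_diff hε hlε hw' h
  have hJ : ∀ p ∈ st (lo + 2 * ε) (hi - 2 * ε) δ, md (p.1, p.2 + lam) - md p = Δ p :=
    fun p hp => mid_jump hε hlε hw' h hp
  have hmb : ∀ p ∈ st (lo + 2 * ε) (hi + 8 * ε) δ, ‖md p‖ ≤ M * A ∧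
      -(p.2 / lam).im * ‖md p‖ ≤ M * B := by
    intro p hp
    have := mid_bound hε hlε hw' hC h hp
    refine ⟨this.1.trans (le_of_eq ?_), this.2.trans (le_of_eq ?_)⟩
    · rw [hA]; ring
    · rw [hB]; ring
  clear_value md A B
  set F1 : ℂ × ℂ → ℂ := fun p => md (p.1, p.2 + lam) - Δ p with hF1
  set F3 : ℂ × ℂ → ℂ := fun p => md (p.1, p.2 - lam) + Δ (p.1, p.2 - lam) with hF3
  have hXa : ∀ p : ℂ × ℂ, XX (p.1, p.2 + lam) = XX p + 10 * ε := fun p => by rw [XX_add, hlε]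
  have hXs : ∀ p : ℂ × ℂ, XX (p.1, p.2 - lam) = XX p - 10 * ε := fun p => by rw [XX_sub, hlε]
  have hJs : ∀ p ∈ st (lo + 12 * ε) (hi + 8 * ε) δ, md p = F3 p := by
    intro p hp
    obtain ⟨a1, a2, a3, a4⟩ := mem_st.1 hp
    have := hJ (p.1, p.2 - lam) (mem_st.2 ⟨a1, a2, by rw [hXs]; linarith, by rw [hXs]; linarith⟩)
    simp only [sub_add_cancel] at this
    simp only [hF3]
    rw [← this]; simp
  set φ : ℂ × ℂ → ℂ := fun p => if XX p < lo + 3 * ε then F1 p else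
    if hi + 7 * ε < XX p then F3 p else md p with hφ
  have E1 : ∀ p ∈ st lo (lo + 4 * ε) δ, φ p = F1 p := by
    intro p hp
    obtain ⟨a1, a2, a3, a4⟩ := mem_st.1 hp
    simp only [hφ]
    split_ifs with q1 q2
    · rfl
    · linarith
    · have := hJ p (mem_st.2 ⟨a1, a2, by linarith, by linarith⟩)
      simp only [hF1]; rw [← this]; ring
  have E2 : ∀ p ∈ st (lo + 2 * ε) (hi + 8 * ε) δ, φ p = md p := by
    intro p hp
    obtain ⟨a1, a2, a3, a4⟩ := mem_st.1 hp
    simp only [hφ]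
    split_ifs with q1 q2
    · have := hJ p (mem_st.2 ⟨a1, a2, by linarith, by linarith⟩)
      simp only [hF1]; rw [← this]; ring
    · exact (hJs p (mem_st.2 ⟨a1, a2, by linarith, by linarith⟩)).symm
    · rfl
  have E3 : ∀ p ∈ st (hi + 6 * ε) (hi + 10 * ε) δ, φ p = F3 p := by
    intro p hp
    obtain ⟨a1, a2, a3, a4⟩ := mem_st.1 hp
    simp only [hφ]
    split_ifs with q1 q2
    · linarith
    · rfl
    · exact hJs p (mem_st.2 ⟨a1, a2, by linarith, by linarith⟩)
  have sh1 : ∀ p ∈ st lo (lo + 4 * ε) δ, p ∈ st lo hi δ ∧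
      (p.1, p.2 + lam) ∈ st (lo + 2 * ε) (hi + 8 * ε) δ := by
    intro p hp
    obtain ⟨a1, a2, a3, a4⟩ := mem_st.1 hp
    exact ⟨mem_st.2 ⟨a1, a2, by linarith, by linarith⟩,
      mem_st.2 ⟨a1, a2, by rw [hXa]; linarith, by rw [hXa]; linarith⟩⟩
  have sh3 : ∀ p ∈ st (hi + 6 * ε) (hi + 10 * ε) δ, (p.1, p.2 - lam) ∈ st lo hi δ ∧
      (p.1, p.2 - lam) ∈ st (lo + 2 * ε) (hi + 8 * ε) δ := by
    intro p hp
    obtain ⟨a1, a2, a3, a4⟩ := mem_st.1 hp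
    exact ⟨mem_st.2 ⟨a1, a2, by rw [hXs]; linarith, by rw [hXs]; linarith⟩,
      mem_st.2 ⟨a1, a2, by rw [hXs]; linarith, by rw [hXs]; linarith⟩⟩
  have F1c : ContinuousOn F1 (st lo (lo + 4 * ε) δ) :=
    (hmc.comp (f := fun p : ℂ × ℂ => (p.1, p.2 + lam)) (by fun_prop) fun p hp => (sh1 p hp).2).sub
      (h.cont.mono fun p hp => (sh1 p hp).1)
  have F3c : ContinuousOn F3 (st (hi + 6 * ε) (hi + 10 * ε) δ) :=
    (hmc.comp (f := fun p : ℂ × ℂ => (p.1, p.2 - lam)) (by fun_prop) fun p hp => (sh3 p hp).2).add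
      (h.cont.comp (f := fun p : ℂ × ℂ => (p.1, p.2 - lam)) (by fun_prop) fun p hp => (sh3 p hp).1)
  have F1d : DifferentiableOn ℂ F1 (ost lo (lo + 4 * ε) δ) := by
    refine (hmdf.comp (f := fun p : ℂ × ℂ => (p.1, p.2 + lam)) (by fun_prop) fun p hp => ?_).sub
      (h.diff.mono fun p hp => ?_)
    · obtain ⟨a1, a2, a3, a4⟩ := mem_ost.1 hp
      exact mem_ost.2 ⟨a1, a2, by rw [hXa]; linarith, by rw [hXa]; linarith⟩
    · obtain ⟨a1, a2, a3, a4⟩ := mem_ost.1 hp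
      exact mem_ost.2 ⟨a1, a2, by linarith, by linarith⟩
  have F3d : DifferentiableOn ℂ F3 (ost (hi + 6 * ε) (hi + 10 * ε) δ) := by
    refine (hmdf.comp (f := fun p : ℂ × ℂ => (p.1, p.2 - lam)) (by fun_prop) fun p hp => ?_).add
      (h.diff.comp (f := fun p : ℂ × ℂ => (p.1, p.2 - lam)) (by fun_prop) fun p hp => ?_)
    · obtain ⟨a1, a2, a3, a4⟩ := mem_ost.1 hp
      exact mem_ost.2 ⟨a1, a2, by rw [hXs]; linarith, by rw [hXs]; linarith⟩
    · obtain ⟨a1, a2, a3, a4⟩ := mem_ost.1 hp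
      exact mem_ost.2 ⟨a1, a2, by rw [hXs]; linarith, by rw [hXs]; linarith⟩
  clear_value φ
  refine ⟨φ, ?_, ?_, ?_, ?_⟩
  · intro p hp
    obtain ⟨a1, a2, a3, a4⟩ := mem_st.1 hp
    rcases lt_or_ge (XX p) (lo + 4 * ε) with q | q
    · exact glue_cont F1c E1 hp (Or.inr le_rfl) (Or.inl q)
    · rcases lt_or_ge (XX p) (hi + 8 * ε) with q' | q'
      · exact glue_cont hmc E2 hp (Or.inl (by linarith)) (Or.inl q')
      · exact glue_cont F3c E3 hp (Or.inl (by linarith)) (Or.inr le_rfl)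
  · intro p hp
    refine DifferentiableAt.differentiableWithinAt ?_
    obtain ⟨a1, a2, a3, a4⟩ := mem_ost.1 hp
    rcases lt_or_ge (XX p) (lo + 4 * ε) with q | q
    · exact glue_diff F1d E1 (mem_ost.2 ⟨a1, a2, a3, q⟩)
    · rcases lt_or_ge (XX p) (hi + 8 * ε) with q' | q'
      · exact glue_diff hmdf E2 (mem_ost.2 ⟨a1, a2, by linarith, q'⟩)
      · exact glue_diff F3d E3 (mem_ost.2 ⟨a1, a2, by linarith, a4⟩)
  · intro p hp
    obtain ⟨a1, a2, a3, a4⟩ := mem_st.1 hp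
    have hX := hXa p
    rcases lt_or_ge (XX p) (lo + 4 * ε) with q | q
    · rw [E1 p (mem_st.2 ⟨a1, a2, a3, q.le⟩),
        E2 (p.1, p.2 + lam) (mem_st.2 ⟨a1, a2, by rw [hX]; linarith, by rw [hX]; linarith⟩)]
      simp [hF1]
    · rcases lt_or_ge (XX p) (hi - 2 * ε) with q' | q'
      · rw [E2 p (mem_st.2 ⟨a1, a2, by linarith, by linarith⟩),
          E2 (p.1, p.2 + lam) (mem_st.2 ⟨a1, a2, by rw [hX]; linarith, by rw [hX]; linarith⟩)]
        exact hJ p (mem_st.2 ⟨a1, a2, by linarith, by linarith⟩)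
      · rw [E2 p (mem_st.2 ⟨a1, a2, by linarith, by linarith⟩),
          E3 (p.1, p.2 + lam) (mem_st.2 ⟨a1, a2, by rw [hX]; linarith, by rw [hX]; linarith⟩)]
        simp [hF3]
  · intro p hp
    obtain ⟨a1, a2, a3, a4⟩ := mem_st.1 hp
    have imadd : ((p.2 + lam) / lam).im = (p.2 / lam).im := by
      rw [add_div, div_self hl0]; simp
    have imsub : ((p.2 - lam) / lam).im = (p.2 / lam).im := by
      rw [sub_div, div_self hl0]; simp
    have comb : ∀ x y : ℂ, ‖x‖ ≤ M * A → -(p.2 / lam).im * ‖x‖ ≤ M * B → ‖y‖ ≤ M →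
        |(p.2 / lam).im| * ‖y‖ ≤ M * ‖lam‖⁻¹ → ∀ z : ℂ, ‖z‖ ≤ ‖x‖ + ‖y‖ →
        ‖z‖ ≤ (A + 1 + B + ‖lam‖⁻¹) * M ∧ -(p.2 / lam).im * ‖z‖ ≤ (A + 1 + B + ‖lam‖⁻¹) * M := by
      intro x y hx1 hx2 hy1 hy2 z hz
      have t1 := mul_nonneg hM hA0.le
      have t2 := mul_nonneg hM hB0.le
      have t3 := mul_nonneg hM hln.le
      refine ⟨by nlinarith, ?_⟩
      rcases le_or_gt (-(p.2 / lam).im) 0 with h0 | h0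
      · have := mul_nonpos_of_nonpos_of_nonneg h0 (norm_nonneg z)
        nlinarith
      · rw [abs_of_neg (by linarith)] at hy2
        have := mul_le_mul_of_nonneg_left hz h0.le
        nlinarith
    rcases lt_or_ge (XX p) (lo + 4 * ε) with q | q
    · have hm := mem_st.2 ⟨a1, a2, a3, q.le⟩
      obtain ⟨m1, m2⟩ := sh1 p hm
      have b1 := hmb _ m2
      have b2 := h.b3 (lam := lam) m1
      rw [imadd] at b1
      rw [E1 p hm]
      exact comb _ _ b1.1 b1.2 b2.1 b2.2 _ (norm_sub_le _ _)
    · rcases lt_or_ge (XX p) (hi + 8 * ε) with q' | q'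
      · have hm : p ∈ st (lo + 2 * ε) (hi + 8 * ε) δ := mem_st.2 ⟨a1, a2, by linarith, q'.le⟩
        have b1 := hmb _ hm
        rw [E2 p hm]
        refine comb (md p) 0 b1.1 b1.2 ?_ ?_ _ (by simp)
        · simpa using hM
        · simp; positivity
      · have hm : p ∈ st (hi + 6 * ε) (hi + 10 * ε) δ := mem_st.2 ⟨a1, a2, by linarith, a4⟩
        obtain ⟨m1, m2⟩ := sh3 p hm
        have b1 := hmb _ m2
        have b2 := h.b3 (lam := lam) m1
        rw [imsub] at b1 b2
        rw [E3 p hm]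
        exact comb _ _ b1.1 b1.2 b2.1 b2.2 _ (norm_add_le _ _)

end S13

namespace S13

open MeasureTheory Filter Topology

lemma sol_unique (lam : ℂ) (hl : 0 < lam.re) (lo hi δ : ℝ) (hw : lam.re < hi - lo)
    (Δ φ ψ : ℂ × ℂ → ℂ)
    (c1 : ContinuousOn φ (st lo (hi + lam.re) δ)) (d1 : DifferentiableOn ℂ φ (ost lo (hi + lam.re) δ))
    (e1 : ∀ p ∈ st lo hi δ, φ (p.1, p.2 + lam) - φ p = Δ p)
    (M1 : ℝ) (b1 : ∀ p ∈ st lo (hi + lam.re) δ, ‖φ p‖ ≤ M1)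
    (N1 : ℝ) (n1 : ∀ p ∈ st lo (hi + lam.re) δ, (p.2 / lam).im ≤ -1 →
      ‖φ p‖ * Real.sqrt |(p.2 / lam).im| ≤ N1)
    (c2 : ContinuousOn ψ (st lo (hi + lam.re) δ)) (d2 : DifferentiableOn ℂ ψ (ost lo (hi + lam.re) δ))
    (e2 : ∀ p ∈ st lo hi δ, ψ (p.1, p.2 + lam) - ψ p = Δ p)
    (M2 : ℝ) (b2 : ∀ p ∈ st lo (hi + lam.re) δ, ‖ψ p‖ ≤ M2)
    (N2 : ℝ) (n2 : ∀ p ∈ st lo (hi + lam.re) δ, (p.2 / lam).im ≤ -1 →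
      ‖ψ p‖ * Real.sqrt |(p.2 / lam).im| ≤ N2) :
    ∀ p ∈ st lo (hi + lam.re) δ, φ p = ψ p := by
  rintro ⟨c, ζ⟩ ⟨h1, h2, h3, h4⟩
  simp only at h1 h2 h3 h4
  have s1 := slice_hol φ lo (hi + lam.re) δ c1 d1 c h1 h2
  have s2 := slice_hol ψ lo (hi + lam.re) δ c2 d2 c h1 h2
  have hm : ∀ z : ℂ, Real.log ‖c‖ + lo ≤ z.re → z.re ≤ Real.log ‖c‖ + hi + lam.re →
      (c, z) ∈ st lo (hi + lam.re) δ := fun z q1 q2 => ⟨h1, h2, q1, by simp only; linarith⟩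
  have key := periodic_zero lam hl (fun z => φ (c, z) - ψ (c, z)) (Real.log ‖c‖ + lo)
    (Real.log ‖c‖ + hi) (by linarith) ?_ ?_ (M1 + M2) ?_ (N1 + N2) ?_ ζ h3 (by linarith)
  · exact sub_eq_zero.1 key
  · have := s1.sub s2
    rw [← add_assoc] at this
    exact this
  · intro z q1 q2
    have r1 := e1 (c, z) ⟨h1, h2, q1, q2⟩
    have r2 := e2 (c, z) ⟨h1, h2, q1, q2⟩
    simp only at r1 r2 ⊢
    linear_combination r1 - r2
  · intro z q1 q2
    have := norm_sub_le (φ (c, z)) (ψ (c, z))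
    have := b1 _ (hm z q1 q2)
    have := b2 _ (hm z q1 q2)
    linarith
  · intro z q1 q2 q3
    have t := norm_sub_le (φ (c, z)) (ψ (c, z))
    have t1 := n1 _ (hm z q1 q2) q3
    have t2 := n2 _ (hm z q1 q2) q3
    have t3 := mul_le_mul_of_nonneg_right t (Real.sqrt_nonneg |(z / lam).im|)
    simp only at t1 t2
    linarith

lemma sqrt_bd (v x K : ℝ) (hv : v ≤ -1) (hx : 0 ≤ x) (h : -v * x ≤ K) :
    x * Real.sqrt |v| ≤ K := by
  rw [abs_of_neg (by linarith)]
  have : Real.sqrt (-v) ≤ -v := by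
    rw [Real.sqrt_le_left (by linarith)]
    nlinarith
  nlinarith

end S13

/-- parametrized resolution of the difference equation with estimates and
uniqueness; `q = exp(2πiτ)`, `λ = −2πiτ`, `λ₁ = 2π·Im τ`. -/
theorem statement13 (τ : ℂ) (hτ : 0 < τ.im) (a b : ℝ) (ha : 0 < a) (hab : a < b)
    (haqb : a < ‖Complex.exp (2 * (Real.pi : ℂ) * Complex.I * τ)‖ * b)
    (m : ℕ) (hm : 3 ≤ m) :
    ∃ δ₀ C : ℝ, 0 < δ₀ ∧ 0 < C ∧
      ∀ δ : ℝ, 0 < δ → δ ≤ δ₀ →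
        ∀ Δ : ℂ × ℂ → ℂ,
          ContinuousOn Δ (paramStrip a b δ) →
          DifferentiableOn ℂ Δ (interior (paramStrip a b δ)) →
          BddAbove ((fun p : ℂ × ℂ => ‖Δ p‖ * ‖p.2‖ ^ m) ''
            paramStrip a b δ) →
          ∃ φ : ℂ × ℂ → ℂ,
            diffSolProp τ a b δ Δ φ ∧
            (∀ φ' : ℂ × ℂ → ℂ, diffSolProp τ a b δ Δ φ' →
              ∀ p ∈ paramStrip' τ a b δ, φ' p = φ p) ∧
            (∀ p ∈ paramStrip' τ a b δ,
              ‖φ p‖ ≤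
                C * sSup ((fun p : ℂ × ℂ =>
                    ‖Δ p‖ * ‖p.2‖ ^ m) '' paramStrip a b δ)) ∧
            (∀ p ∈ paramStrip' τ a b δ,
              (p.2 / (-(2 * (Real.pi : ℂ) * Complex.I * τ))).im ≤ -1 →
              ‖φ p‖ ≤
                C * sSup ((fun p : ℂ × ℂ =>
                    ‖Δ p‖ * ‖p.2‖ ^ m) '' paramStrip a b δ) /
                  Real.sqrt |(p.2 / (-(2 * (Real.pi : ℂ) * Complex.I * τ))).im|) := by
  obtain ⟨lam, hlam⟩ : ∃ lam : ℂ, lam = -(2 * (Real.pi : ℂ) * Complex.I * τ) := ⟨_, rfl⟩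
  have hre : lam.re = 2 * Real.pi * τ.im := by rw [hlam]; simp
  have hl : 0 < lam.re := by rw [hre]; positivity
  have hb : 0 < b := ha.trans hab
  set lo := -Real.log b with hlo
  set hi := -Real.log a with hhi
  have hw : lam.re < hi - lo := by
    rw [Complex.norm_exp] at haqb
    have h1 : (2 * (Real.pi : ℂ) * Complex.I * τ).re = -lam.re := by rw [hlam]; simp
    rw [h1] at haqb
    have h2 := Real.log_lt_log ha haqb
    rw [Real.log_mul (Real.exp_pos _).ne' hb.ne', Real.log_exp] at h2
    rw [hlo, hhi]; linarith
  have hS : ∀ δ, paramStrip a b δ = S13.st lo hi δ := by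
    intro δ
    ext p
    simp only [paramStrip, S13.st, Set.mem_ofPred_eq, hlo, hhi, sub_eq_add_neg]
  have hS' : ∀ δ, paramStrip' τ a b δ = S13.st lo (hi + lam.re) δ := by
    intro δ
    ext p
    simp only [paramStrip', S13.st, Set.mem_ofPred_eq, hlo, hhi, hre, sub_eq_add_neg, add_assoc]
  obtain ⟨K, hK, hsol⟩ := S13.exists_sol lam hl lo hi hw
  refine ⟨a * Real.exp (-1), K, by positivity, hK, ?_⟩
  intro δ hδ hδ0 Δ hc hd hbd
  unfold diffSolProp
  rw [← hlam]
  simp only [hS, hS', S13.interior_st] at *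
  set M := sSup ((fun p : ℂ × ℂ => ‖Δ p‖ * ‖p.2‖ ^ m) '' S13.st lo hi δ) with hM
  have hM0 : 0 ≤ M := by
    refine Real.sSup_nonneg ?_
    rintro _ ⟨p, -, rfl⟩
    positivity
  have hfar : ∀ p ∈ S13.st lo hi δ, 1 ≤ |p.2.re| := by
    rintro p ⟨h1, h2, h3, h4⟩
    have h5 := Real.log_le_log h1 (h2.trans hδ0)
    rw [Real.log_mul ha.ne' (Real.exp_pos _).ne', Real.log_exp] at h5
    rw [le_abs]; right
    rw [hhi] at h4; linarith
  have hDat : S13.Dat lo hi δ M Δ := by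
    refine ⟨hc, hd, hfar, ?_⟩
    intro p hp
    have h1 : 1 ≤ ‖p.2‖ := (hfar p hp).trans (Complex.abs_re_le_norm _)
    calc ‖Δ p‖ * ‖p.2‖ ^ 3 ≤ ‖Δ p‖ * ‖p.2‖ ^ m := by gcongr
      _ ≤ M := le_csSup hbd ⟨p, hp, rfl⟩
  obtain ⟨φ, c1, d1, e1, b1⟩ := hsol δ M Δ hM0 hDat
  have n1 : ∀ p ∈ S13.st lo (hi + lam.re) δ, (p.2 / lam).im ≤ -1 →
      ‖φ p‖ * Real.sqrt |(p.2 / lam).im| ≤ K * M := fun p hp hv =>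
    S13.sqrt_bd _ _ _ hv (norm_nonneg _) (b1 p hp).2
  refine ⟨φ, ⟨c1, d1, e1, ⟨K * M, fun p hp => (b1 p hp).1⟩, ⟨K * M, n1⟩⟩, ?_,
    fun p hp => (b1 p hp).1, ?_⟩
  · rintro ψ ⟨c2, d2, e2, ⟨M2, b2⟩, ⟨N2, n2⟩⟩
    exact S13.sol_unique lam hl lo hi δ hw Δ ψ φ c2 d2 e2 M2 b2 N2 n2 c1 d1 e1 (K * M)
      (fun p hp => (b1 p hp).1) (K * M) n1
  · intro p hp hv
    rw [le_div_iff₀ (Real.sqrt_pos.2 (abs_pos.2 (by linarith)))]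
    exact n1 p hp hv
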